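/- arXiv:1202.5463 — 5 statements merged into one kernel-verified Lean document; each statement's English description precedes it below -/
import Mathlib

section
/- The function d^c_GHP is a well-defined finite metric on the set 𝕂 of GHP-isometry classes of compact rooted weighted metric spaces (in particular d^c_GHP(X,X') = 0 if and only if X and X' are GHP-isometric, and d^c_GHP satisfies the triangle inequality), and the metric space (𝕂, d^c_GHP) is Polish, i.e. complete and separable. -/
/-!
The Gromov–Hausdorff–Prohorov distance is treated through the function `GHP.cost`, the sum minimised
over all couplings of two spaces in a common Polish space.

*Triangle inequality.* Couplings of `X n` with `X (n + 1)`, for all `n`, are glued successively along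
the common copies of the `X n`; the completion of the inductive limit is a single Polish space
containing all the couplings (`GHP.exists_glue`, `GHP.exists_chain`). Inside one space, Hausdorff
distance, distance of roots and Lévy–Prokhorov distance each satisfy the triangle inequality.

*Separation.* If the distance is zero, take couplings `f n`, `g n` of cost tending to `0` and an
ultrafilter on `ℕ`. By compactness the relation `dist (f n x) (g n y) → 0` along the ultrafilter is
the graph of a surjective isometry, which preserves the root; uniformity of the convergence shows
that the two measures are at Lévy–Prokhorov distance zero, hence equal
(`GHP.isometric_of_dcGHP_eq_zero`).

*Completeness.* A rapidly Cauchy sequence is realised in one Polish space `W`. Its images converge in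
the complete space of nonempty compact subsets of `W`, to a set `L`, and the roots converge to a point
of `L`. The measures are transported to `L` by measurable near-projections, where they form a Cauchy
sequence of finite measures on a compact space; such a sequence converges
(`GHP.exists_lp_limit`, `GHP.exists_limit`).

*Separability.* Every compact metric space embeds isometrically in the separable Banach space of
continuous functions on the Cantor space. Finite spaces whose points and masses are taken from fixed
dense sequences are then dense (`GHP.exists_finSpace_near`).
-/

open Metric Set

/-- A rooted weighted metric space: a metric space with a distinguished root and a
Borel measure. -/
structure RWSpace : Type 1 where
  carrier : Type
  [met : MetricSpace carrier]
  [mble : MeasurableSpace carrier]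
  [bor : BorelSpace carrier]
  root : carrier
  vol : MeasureTheory.Measure carrier

attribute [instance] RWSpace.met RWSpace.mble RWSpace.bor

open MeasureTheory

/-- Two rooted weighted metric spaces are GHP-isometric if there is a root-preserving,
measure-preserving isometric bijection between them. -/
def GHPIsometric (X Y : RWSpace) : Prop :=
  ∃ e : X.carrier ≃ᵢ Y.carrier, e X.root = Y.root ∧ Measure.map (⇑e) X.vol = Y.vol

/-- The set of costs of embeddings of `X` and `Y` into a common Polish metric space:
Hausdorff distance of images + distance of roots + Prohorov distance of pushforwards. -/
def ghpSet (X Y : RWSpace) : Set ℝ :=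
  {c : ℝ | ∃ (Z : Type) (_ : MetricSpace Z) (_ : MeasurableSpace Z) (_ : BorelSpace Z)
      (Φ : X.carrier → Z) (Φ' : Y.carrier → Z),
        Isometry Φ ∧ Isometry Φ' ∧ CompleteSpace Z ∧ TopologicalSpace.SeparableSpace Z ∧
        c = hausdorffDist (Set.range Φ) (Set.range Φ') + dist (Φ X.root) (Φ' Y.root)
            + levyProkhorovDist (Measure.map Φ X.vol) (Measure.map Φ' Y.vol)}

/-- The Gromov–Hausdorff–Prohorov distance between two (compact) rooted weighted
metric spaces. -/
noncomputable def dcGHP (X Y : RWSpace) : ℝ := sInf (ghpSet X Y)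

/-- `X` is a compact rooted weighted metric space (with finite measure). -/
def IsCompactRW (X : RWSpace) : Prop :=
  CompactSpace X.carrier ∧ MeasureTheory.IsFiniteMeasure X.vol

/-- A metric space is a length space when the distance between two points is the infimum
of lengths (total variations) of continuous curves joining them. -/
def IsLengthSpace (E : Type) [MetricSpace E] : Prop :=
  ∀ x y : E, edist x y =
    ⨅ (γ : ℝ → E) (_ : ContinuousOn γ (Set.Icc 0 1)) (_ : γ 0 = x) (_ : γ 1 = y),
      eVariationOn γ (Set.Icc 0 1)

/-- `X` is a rooted weighted complete locally compact length space with locally finite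
measure (an element of 𝕃). -/
def IsLLC (X : RWSpace) : Prop :=
  CompleteSpace X.carrier ∧ LocallyCompactSpace X.carrier ∧ IsLengthSpace X.carrier ∧
    MeasureTheory.IsLocallyFiniteMeasure X.vol

/-- The restriction `X^(r)` of a rooted weighted metric space to the closed ball of
radius `r` (`r ≥ 0`) around the root, with restricted metric and measure. -/
noncomputable def RWSpace.restrict (X : RWSpace) (r : ℝ) : RWSpace where
  carrier := Metric.closedBall X.root (max r 0)
  root := ⟨X.root, Metric.mem_closedBall_self (le_max_right r 0)⟩
  vol := MeasureTheory.Measure.comap Subtype.val X.vol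

/-- The Gromov–Hausdorff–Prohorov distance on rooted weighted complete locally compact
length spaces: `d_GHP(X,Y) = ∫_0^∞ e^{-r} (1 ∧ d^c_GHP(X^(r),Y^(r))) dr`. -/
noncomputable def dGHP (X Y : RWSpace) : ℝ :=
  ∫ r in Set.Ioi (0:ℝ), Real.exp (-r) * min (dcGHP (X.restrict r) (Y.restrict r)) 1

/-- The distance function of a bundled metric space structure. -/
noncomputable def mdist {A : Type 1} (m : MetricSpace A) : A → A → ℝ :=
  letI := m; dist

/-- Completeness w.r.t. a bundled metric space structure. -/
def MSComplete {A : Type 1} (m : MetricSpace A) : Prop := letI := m; CompleteSpace A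

/-- Separability w.r.t. a bundled metric space structure. -/
def MSSeparable {A : Type 1} (m : MetricSpace A) : Prop :=
  letI := m; TopologicalSpace.SeparableSpace A

/-- The GHP-isometry relation on compact rooted weighted metric spaces. -/
def KRel : {X : RWSpace // IsCompactRW X} → {X : RWSpace // IsCompactRW X} → Prop :=
  fun X Y => GHPIsometric X.1 Y.1

/-- 𝕂: GHP-isometry classes of compact rooted weighted metric spaces. -/
def KQuot : Type 1 := Quot KRel


namespace GHP

open Filter Topology
open scoped ENNReal NNReal

set_option linter.unusedSectionVars false

/-! ### The Lévy–Prokhorov distance -/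

section LP

variable {S T : Type} [MetricSpace S] [MeasurableSpace S] [BorelSpace S]
  [MetricSpace T] [MeasurableSpace T] [BorelSpace T]

lemma lpEDist_map_le {f : S → T} (hf : Isometry f) (μ ν : Measure S) :
    levyProkhorovEDist (μ.map f) (ν.map f) ≤ levyProkhorovEDist μ ν := by
  have hm : Measurable f := hf.continuous.measurable
  refine levyProkhorovEDist_le_of_forall _ _ _ fun ε B hε _ hB => ?_
  have hsub : thickening ε.toReal (f ⁻¹' B) ⊆ f ⁻¹' thickening ε.toReal B := by
    intro x hx
    obtain ⟨z, hz, hxz⟩ := mem_thickening_iff.1 hx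
    exact mem_thickening_iff.2 ⟨f z, hz, by rwa [hf.dist_eq]⟩
  rw [Measure.map_apply hm hB, Measure.map_apply hm hB,
    Measure.map_apply hm isOpen_thickening.measurableSet,
    Measure.map_apply hm isOpen_thickening.measurableSet]
  exact ⟨(left_measure_le_of_levyProkhorovEDist_lt hε (hm hB)).trans (by gcongr),
    (right_measure_le_of_levyProkhorovEDist_lt hε (hm hB)).trans (by gcongr)⟩

/-- Completeness of the source makes the embedding closed, so that images of Borel sets are Borel. -/
lemma lpEDist_map_eq [CompleteSpace S] {f : S → T} (hf : Isometry f) (μ ν : Measure S) :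
    levyProkhorovEDist (μ.map f) (ν.map f) = levyProkhorovEDist μ ν := by
  refine le_antisymm (lpEDist_map_le hf μ ν) ?_
  have hm : MeasurableEmbedding f := hf.isClosedEmbedding.measurableEmbedding
  refine levyProkhorovEDist_le_of_forall _ _ _ fun ε B hε _ hB => ?_
  have hpre : f ⁻¹' thickening ε.toReal (f '' B) ⊆ thickening ε.toReal B := by
    intro x hx
    obtain ⟨_, ⟨z, hz, rfl⟩, hxz⟩ := mem_thickening_iff.1 hx
    exact mem_thickening_iff.2 ⟨z, hz, by rwa [hf.dist_eq] at hxz⟩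
  have h1 := left_measure_le_of_levyProkhorovEDist_lt hε (hm.measurableSet_image.2 hB)
  have h2 := right_measure_le_of_levyProkhorovEDist_lt hε (hm.measurableSet_image.2 hB)
  rw [hm.map_apply, hm.map_apply, preimage_image_eq _ hf.injective] at h1 h2
  exact ⟨h1.trans (by gcongr), h2.trans (by gcongr)⟩

/-- Pushing a measure forward by two maps at uniform distance at most `η` moves it by at most `η`
in the Lévy–Prokhorov distance. -/
lemma lpEDist_map_map_le {A : Type} [MeasurableSpace A] (μ : Measure A) {f g : A → S}
    (hf : Measurable f) (hg : Measurable g) {η : ℝ} (h : ∀ x, dist (f x) (g x) ≤ η) :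
    levyProkhorovEDist (μ.map f) (μ.map g) ≤ ENNReal.ofReal η := by
  refine levyProkhorovEDist_le_of_forall _ _ _ fun ε B hε hεt hB => ?_
  have hlt : η < ε.toReal := by
    rcases lt_or_ge η 0 with h0 | h0
    · exact h0.trans_le ENNReal.toReal_nonneg
    · exact (ENNReal.ofReal_lt_iff_lt_toReal h0 hεt.ne).1 hε
  rw [Measure.map_apply hf hB, Measure.map_apply hg hB,
    Measure.map_apply hf isOpen_thickening.measurableSet,
    Measure.map_apply hg isOpen_thickening.measurableSet]
  constructor
  · refine le_add_right (measure_mono fun x hx => ?_)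
    exact mem_thickening_iff.2 ⟨f x, hx, by rw [dist_comm]; exact (h x).trans_lt hlt⟩
  · refine le_add_right (measure_mono fun x hx => ?_)
    exact mem_thickening_iff.2 ⟨g x, hx, (h x).trans_lt hlt⟩

/-- Two measures comparable up to a mass `c` are at Lévy–Prokhorov distance at most `c`. -/
lemma lpEDist_le_of_forall_le_add (μ ν : Measure S) (c : ℝ≥0∞)
    (h : ∀ B, MeasurableSet B → μ B ≤ ν B + c ∧ ν B ≤ μ B + c) :
    levyProkhorovEDist μ ν ≤ c := by
  refine levyProkhorovEDist_le_of_forall _ _ _ fun ε B hε hεt hB => ?_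
  have hpos : 0 < ε.toReal := ENNReal.toReal_pos (bot_le.trans_lt hε).ne' hεt.ne
  have hsub := self_subset_thickening hpos B
  exact ⟨(h B hB).1.trans (by gcongr), (h B hB).2.trans (by gcongr)⟩

lemma measure_eq_of_lpEDist_eq_zero {μ ν : Measure S} [IsFiniteMeasure μ] [IsFiniteMeasure ν]
    (h : levyProkhorovEDist μ ν = 0) : μ = ν := by
  refine ext_of_generate_finite _ (borel_eq_generateFrom_isClosed (α := S) ▸
    BorelSpace.measurable_eq) isPiSystem_isClosed (fun F hF => ?_) ?_
  · exact measure_eq_measure_of_levyProkhorovEDist_eq_zero_of_isClosed h hF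
      ⟨1, one_pos, measure_ne_top _ _⟩ ⟨1, one_pos, measure_ne_top _ _⟩
  · exact measure_eq_measure_of_levyProkhorovEDist_eq_zero_of_isClosed h isClosed_univ
      ⟨1, one_pos, measure_ne_top _ _⟩ ⟨1, one_pos, measure_ne_top _ _⟩

lemma measure_le_lintegral_thickenedIndicator (μ : Measure S) {δ : ℝ} (hδ : 0 < δ) (B : Set S)
    (hB : MeasurableSet B) : μ B ≤ ∫⁻ x, (thickenedIndicator hδ B x : ℝ≥0∞) ∂μ := by
  rw [← lintegral_indicator_one hB]
  refine lintegral_mono fun x => ?_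
  by_cases hx : x ∈ B
  · simp [hx, thickenedIndicator_one hδ B hx]
  · simp [hx]

lemma lintegral_thickenedIndicator_le (μ : Measure S) {δ : ℝ} (hδ : 0 < δ) (B : Set S) :
    ∫⁻ x, (thickenedIndicator hδ B x : ℝ≥0∞) ∂μ ≤ μ (thickening δ B) := by
  rw [← lintegral_indicator_one isOpen_thickening.measurableSet]
  refine lintegral_mono fun x => ?_
  by_cases hx : x ∈ thickening δ B
  · simpa [hx] using thickenedIndicator_le_one hδ B x
  · simp [hx, thickenedIndicator_zero hδ B hx]

lemma measure_univ_le_add_lpEDist (μ ν : Measure S) :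
    ν univ ≤ μ univ + levyProkhorovEDist μ ν := by
  by_cases hfin : levyProkhorovEDist μ ν = ∞
  · simp [hfin]
  refine ENNReal.le_of_forall_pos_le_add fun x hx _ => ?_
  have hlt := ENNReal.lt_add_right hfin (ENNReal.coe_pos.2 hx).ne'
  refine (right_measure_le_of_levyProkhorovEDist_lt hlt MeasurableSet.univ).trans ?_
  rw [add_assoc]
  gcongr
  exact subset_univ _

/-- Completeness of the Lévy–Prokhorov distance on a compact space: a Cauchy sequence of finite
measures has bounded mass, hence a weak limit along an ultrafilter, and the Lévy–Prokhorov distance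
to that limit is controlled by testing against thickened indicators. -/
lemma exists_lp_limit [CompactSpace S] (ν : ℕ → Measure S) [∀ n, IsFiniteMeasure (ν n)]
    (ε : ℕ → ℝ≥0∞) (hε : ∀ n, ε n ≠ ∞)
    (h : ∀ n m, n ≤ m → levyProkhorovEDist (ν n) (ν m) ≤ ε n) :
    ∃ ρ : Measure S, IsFiniteMeasure ρ ∧ ∀ n, levyProkhorovEDist (ν n) ρ ≤ ε n := by
  let P : ℕ → FiniteMeasure S := fun n => ⟨ν n, inferInstance⟩
  let C : ℝ≥0 := (ν 0 univ + ε 0).toNNReal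
  have hCfin : ν 0 univ + ε 0 ≠ ∞ := ENNReal.add_ne_top.2 ⟨measure_ne_top _ _, hε 0⟩
  have hP : ∀ n, (P n).mass ≤ C := fun n => by
    rw [← ENNReal.coe_le_coe, FiniteMeasure.ennreal_mass, ENNReal.coe_toNNReal hCfin]
    exact (measure_univ_le_add_lpEDist (ν 0) (ν n)).trans (by gcongr; exact h 0 n n.zero_le)
  obtain ⟨ρ, -, hρ⟩ := (isCompact_setOfPred_finiteMeasure_le_of_compactSpace S C).ultrafilter_le_nhds
    ((hyperfilter ℕ).map P) (by
      rw [le_principal_iff, Ultrafilter.coe_map, mem_map]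
      exact Filter.univ_mem' hP)
  have hlim : Tendsto P (hyperfilter ℕ : Filter ℕ) (𝓝 ρ) := hρ
  rw [FiniteMeasure.tendsto_iff_forall_lintegral_tendsto] at hlim
  refine ⟨ρ, inferInstance, fun n => ?_⟩
  have hev : ∀ᶠ m in (hyperfilter ℕ : Filter ℕ), n ≤ m :=
    Nat.hyperfilter_le_atTop (eventually_ge_atTop n)
  refine levyProkhorovEDist_le_of_forall_add_pos_le _ _ _ fun x B hx hxt hB => ?_
  have hx2 : x / 2 ≠ 0 := (ENNReal.half_pos hx.ne').ne'
  have hx2t : x / 2 ≠ ∞ := (ENNReal.div_lt_top hxt.ne two_ne_zero).ne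
  set c : ℝ≥0∞ := ε n + x / 2 with hc
  have hct : c ≠ ∞ := ENNReal.add_ne_top.2 ⟨hε n, hx2t⟩
  have hδ : 0 < (x / 2).toReal := ENNReal.toReal_pos hx2 hx2t
  have hsum : c.toReal + (x / 2).toReal = (ε n + x).toReal := by
    rw [← ENNReal.toReal_add hct hx2t, hc, add_assoc, ENNReal.add_halves]
  have hcle : c ≤ ε n + x := by
    rw [hc]; gcongr; exact ENNReal.half_le_self
  have hlt : ∀ m, n ≤ m → levyProkhorovEDist (ν n) (ν m) < c := fun m hm =>
    (h n m hm).trans_lt (ENNReal.lt_add_right (hε n) hx2)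
  constructor
  · have hopen : MeasurableSet (thickening c.toReal B) := isOpen_thickening.measurableSet
    have key : ν n B ≤ ∫⁻ y, (thickenedIndicator hδ (thickening c.toReal B) y : ℝ≥0∞) ∂ρ + c := by
      refine ge_of_tendsto ((hlim (thickenedIndicator hδ (thickening c.toReal B))).add_const c) ?_
      filter_upwards [hev] with m hm
      refine (left_measure_le_of_levyProkhorovEDist_lt (hlt m hm) hB).trans ?_
      gcongr
      exact measure_le_lintegral_thickenedIndicator (ν m) hδ _ hopen
    rw [add_assoc]
    refine key.trans (add_le_add ((lintegral_thickenedIndicator_le _ hδ _).trans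
      (measure_mono ?_)) hcle)
    rw [← hsum, add_comm]
    exact thickening_thickening_subset _ _ _
  · rw [add_assoc]
    have key : ∫⁻ y, (thickenedIndicator hδ B y : ℝ≥0∞) ∂ρ ≤
        ν n (thickening (ε n + x).toReal B) + (ε n + x) := by
      refine le_of_tendsto (hlim (thickenedIndicator hδ B)) ?_
      filter_upwards [hev] with m hm
      refine (lintegral_thickenedIndicator_le (ν m) hδ B).trans
        ((right_measure_le_of_levyProkhorovEDist_lt (hlt m hm)
          isOpen_thickening.measurableSet).trans (add_le_add (measure_mono ?_) hcle))
      rw [← hsum]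
      exact thickening_thickening_subset _ _ _
    exact (measure_le_lintegral_thickenedIndicator _ hδ B hB).trans key

end LP

/-! ### Gluing a sequence of couplings -/

section Glue

open TopologicalSpace

/-- A separable metric space with an isometric copy of `A`: the data carried along when a sequence
of couplings is glued together. -/
structure Stage (A : Type) [MetricSpace A] : Type 1 where
  Space : Type
  [metric : MetricSpace Space]
  [sep : SeparableSpace Space]
  embed : A → Space
  isom : Isometry embed

attribute [instance] Stage.metric Stage.sep

lemma separableSpace_glueSpace {A B C : Type} [Nonempty A] [MetricSpace A] [MetricSpace B]
    [MetricSpace C] [SeparableSpace B] [SeparableSpace C] {f : A → B} {g : A → C}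
    (hf : Isometry f) (hg : Isometry g) : SeparableSpace (GlueSpace hf hg) := by
  have hcont : Continuous (Sum.elim (toGlueL hf hg) (toGlueR hf hg)) :=
    (toGlueL_isometry hf hg).continuous.sumElim (toGlueR_isometry hf hg).continuous
  refine DenseRange.separableSpace (Function.Surjective.denseRange ?_) hcont
  rintro ⟨x | y⟩
  · exact ⟨Sum.inl x, rfl⟩
  · exact ⟨Sum.inr y, rfl⟩

variable {A : ℕ → Type} [∀ n, MetricSpace (A n)] [∀ n, Nonempty (A n)] [SeparableSpace (A 0)]
  {Z : ℕ → Type} [∀ n, MetricSpace (Z n)] [∀ n, SeparableSpace (Z n)]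
  {f : ∀ n, A n → Z n} {g : ∀ n, A (n + 1) → Z n}

/-- The space at step `n + 1` is the space at step `n`, with `Z n` glued along `A n`. -/
noncomputable def stage (hf : ∀ n, Isometry (f n)) (hg : ∀ n, Isometry (g n)) : ∀ n, Stage (A n)
  | 0 => { Space := A 0, embed := id, isom := isometry_id }
  | n + 1 =>
    { Space := GlueSpace (stage hf hg n).isom (hf n)
      sep := separableSpace_glueSpace _ _
      embed := toGlueR (stage hf hg n).isom (hf n) ∘ g n
      isom := (toGlueR_isometry _ _).comp (hg n) }

/-- If `Z n` contains isometric copies of `A n` and `A (n + 1)`, then all the `Z n` embed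
simultaneously in one Polish space, the two copies of each `A n` being identified. -/
lemma exists_glue (hf : ∀ n, Isometry (f n)) (hg : ∀ n, Isometry (g n)) :
    ∃ (W : Type) (_ : MetricSpace W) (_ : CompleteSpace W) (_ : SeparableSpace W)
      (ι : ∀ n, Z n → W), (∀ n, Isometry (ι n)) ∧ ∀ n, ι n ∘ g n = ι (n + 1) ∘ f (n + 1) := by
  let Y := stage hf hg
  let F : ∀ n, (Y n).Space → (Y (n + 1)).Space := fun n => toGlueL (Y n).isom (hf n)
  have I : ∀ n, Isometry (F n) := fun n => toGlueL_isometry _ _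
  let R : ∀ n, Z n → (Y (n + 1)).Space := fun n => toGlueR (Y n).isom (hf n)
  have hR : ∀ n, Isometry (R n) := fun n => toGlueR_isometry _ _
  have hRF : ∀ n, F n ∘ (Y n).embed = R n ∘ f n := fun n => toGlue_commute _ _
  have hsep : SeparableSpace (InductiveLimit I) := separableSpaceInductiveLimit_of_separableSpace I
  refine ⟨UniformSpace.Completion (InductiveLimit I), inferInstance, inferInstance, inferInstance,
    fun n z => ((toInductiveLimit I (n + 1) (R n z) : InductiveLimit I) :
      UniformSpace.Completion (InductiveLimit I)), fun n => ?_, fun n => ?_⟩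
  · exact UniformSpace.Completion.coe_isometry.comp ((toInductiveLimit_isometry I _).comp (hR n))
  · funext a
    have h1 : R n (g n a) = (Y (n + 1)).embed a := rfl
    have h2 : R (n + 1) (f (n + 1) a) = F (n + 1) ((Y (n + 1)).embed a) :=
      (congrFun (hRF (n + 1)) a).symm
    have h3 := congrFun (toInductiveLimit_commute I (n + 1)) ((Y (n + 1)).embed a)
    simp only [Function.comp_apply] at h3 ⊢
    rw [h1, h2, h3]

end Glue

/-! ### Symmetry and the triangle inequality -/

section Cost

open TopologicalSpace

variable {X Y : RWSpace}

/-- The cost of a pair of maps into a common space: the quantity minimised by `dcGHP`. -/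
noncomputable def cost (X Y : RWSpace) {Z : Type} [MetricSpace Z] [MeasurableSpace Z]
    (f : X.carrier → Z) (g : Y.carrier → Z) : ℝ :=
  hausdorffDist (range f) (range g) + dist (f X.root) (g Y.root)
    + levyProkhorovDist (Measure.map f X.vol) (Measure.map g Y.vol)

instance (X : RWSpace) : Nonempty X.carrier := ⟨X.root⟩

lemma dcGHP_le {Z : Type} [MetricSpace Z] [MeasurableSpace Z] [BorelSpace Z] [CompleteSpace Z]
    [SeparableSpace Z] {f : X.carrier → Z} {g : Y.carrier → Z} (hf : Isometry f) (hg : Isometry g) :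
    dcGHP X Y ≤ cost X Y f g := by
  refine csInf_le ⟨0, ?_⟩ ⟨Z, _, _, ‹_›, f, g, hf, hg, ‹_›, ‹_›, rfl⟩
  rintro c ⟨Z, _, _, _, f, g, -, -, -, -, rfl⟩
  exact add_nonneg (add_nonneg hausdorffDist_nonneg dist_nonneg) ENNReal.toReal_nonneg

lemma ghpSet_nonneg {c : ℝ} (hc : c ∈ ghpSet X Y) : 0 ≤ c := by
  obtain ⟨Z, _, _, _, f, g, -, -, -, -, rfl⟩ := hc
  exact add_nonneg (add_nonneg hausdorffDist_nonneg dist_nonneg) ENNReal.toReal_nonneg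

lemma dcGHP_nonneg (X Y : RWSpace) : 0 ≤ dcGHP X Y := Real.sInf_nonneg fun _ => ghpSet_nonneg

lemma ghpSet_nonempty (hX : IsCompactRW X) (hY : IsCompactRW Y) : (ghpSet X Y).Nonempty := by
  have := hX.1
  have := hY.1
  obtain ⟨Z, _, _, f, g, hf, hg⟩ : ∃ (Z : Type) (_ : MetricSpace Z) (_ : CompactSpace Z)
      (f : X.carrier → Z) (g : Y.carrier → Z), Isometry f ∧ Isometry g := by
    let : MetricSpace (X.carrier ⊕ Y.carrier) := metricSpaceSum
    exact ⟨X.carrier ⊕ Y.carrier, inferInstance, inferInstance, Sum.inl, Sum.inr, isometry_inl,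
      isometry_inr⟩
  let : MeasurableSpace Z := borel Z
  have : BorelSpace Z := ⟨rfl⟩
  exact ⟨_, Z, inferInstance, inferInstance, inferInstance, f, g, hf, hg, inferInstance, inferInstance, rfl⟩

lemma ghpSet_swap (X Y : RWSpace) : ghpSet X Y ⊆ ghpSet Y X := by
  rintro c ⟨Z, m, _, _, f, g, hf, hg, hc, hs, rfl⟩
  exact ⟨Z, _, _, ‹_›, g, f, hg, hf, hc, hs, by
    rw [hausdorffDist_comm, dist_comm, levyProkhorovDist_comm]⟩

lemma dcGHP_comm (X Y : RWSpace) : dcGHP X Y = dcGHP Y X :=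
  congrArg sInf ((ghpSet_swap X Y).antisymm (ghpSet_swap Y X))

lemma cost_comp_le (hX : IsCompactRW X) (hY : IsCompactRW Y) {Z W : Type} [MetricSpace Z]
    [MeasurableSpace Z] [BorelSpace Z] [MetricSpace W] [MeasurableSpace W] [BorelSpace W]
    {f : X.carrier → Z} {g : Y.carrier → Z} (hf : Isometry f) (hg : Isometry g)
    {ι : Z → W} (hι : Isometry ι) :
    cost X Y (ι ∘ f) (ι ∘ g) ≤ cost X Y f g := by
  have := hX.2
  have := hY.2
  rw [cost, cost, range_comp, range_comp, hausdorffDist_image hι, Function.comp_apply,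
    Function.comp_apply, hι.dist_eq, ← Measure.map_map hι.continuous.measurable
      hf.continuous.measurable, ← Measure.map_map hι.continuous.measurable hg.continuous.measurable]
  gcongr
  exact ENNReal.toReal_mono (levyProkhorovEDist_ne_top _ _) (lpEDist_map_le hι _ _)

/-- A sequence of spaces with prescribed successive distances is realised, up to an arbitrarily
small loss, inside a single Polish space. -/
lemma exists_chain (X : ℕ → RWSpace) (hX : ∀ n, IsCompactRW (X n)) (r : ℕ → ℝ)
    (hr : ∀ n, dcGHP (X n) (X (n + 1)) < r n) :
    ∃ (W : Type) (_ : MetricSpace W) (_ : MeasurableSpace W) (_ : BorelSpace W)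
      (_ : CompleteSpace W) (_ : SeparableSpace W) (φ : ∀ n, (X n).carrier → W),
      (∀ n, Isometry (φ n)) ∧ ∀ n, cost (X n) (X (n + 1)) (φ n) (φ (n + 1)) < r n := by
  have hex : ∀ n, ∃ (Z : Type) (_ : MetricSpace Z) (_ : MeasurableSpace Z) (_ : BorelSpace Z)
      (_ : SeparableSpace Z) (f : (X n).carrier → Z) (g : (X (n + 1)).carrier → Z),
      Isometry f ∧ Isometry g ∧ cost (X n) (X (n + 1)) f g < r n := by
    intro n
    obtain ⟨c, ⟨Z, _, _, _, f, g, hf, hg, _, hs, rfl⟩, hlt⟩ :=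
      exists_lt_of_csInf_lt (ghpSet_nonempty (hX n) (hX (n + 1))) (hr n)
    exact ⟨Z, _, _, ‹_›, hs, f, g, hf, hg, hlt⟩
  choose Z mZ sZ bZ pZ f g hf hg hlt using hex
  have := (hX 0).1
  obtain ⟨W, mW, cW, pW, ι, hι, hιfg⟩ := exists_glue hf hg
  let : MeasurableSpace W := borel W
  have : BorelSpace W := ⟨rfl⟩
  refine ⟨W, mW, inferInstance, inferInstance, cW, pW, fun n => ι n ∘ f n,
    fun n => (hι n).comp (hf n), fun n => ?_⟩
  change cost _ _ (ι n ∘ f n) (ι (n + 1) ∘ f (n + 1)) < r n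
  rw [← hιfg n]
  exact (cost_comp_le (hX n) (hX (n + 1)) (hf n) (hg n) (hι n)).trans_lt (hlt n)

lemma dcGHP_self (hX : IsCompactRW X) : dcGHP X X = 0 := by
  have := hX.1
  refine le_antisymm ?_ (dcGHP_nonneg X X)
  refine (dcGHP_le (f := id) (g := id) isometry_id isometry_id).trans ?_
  simp [cost, hausdorffDist_self_zero, levyProkhorovDist_self]

lemma cost_triangle {V : RWSpace} (hX : IsCompactRW X) (hY : IsCompactRW Y) (hV : IsCompactRW V)
    {Z : Type} [MetricSpace Z] [MeasurableSpace Z] [BorelSpace Z] {f : X.carrier → Z}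
    {g : Y.carrier → Z} {h : V.carrier → Z} (hf : Isometry f) (hg : Isometry g) :
    cost X V f h ≤ cost X Y f g + cost Y V g h := by
  have := hX.1
  have := hY.1
  have := hX.2
  have := hY.2
  have := hV.2
  have h1 : hausdorffDist (range f) (range h) ≤
      hausdorffDist (range f) (range g) + hausdorffDist (range g) (range h) :=
    hausdorffDist_triangle (hausdorffEDist_ne_top_of_nonempty_of_bounded (range_nonempty _)
      (range_nonempty _) (isCompact_range hf.continuous).isBounded
      (isCompact_range hg.continuous).isBounded)
  have h2 := dist_triangle (f X.root) (g Y.root) (h V.root)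
  have h3 := levyProkhorovDist_triangle (X.vol.map f) (Y.vol.map g) (V.vol.map h)
  unfold cost
  linarith

lemma dcGHP_triangle {V : RWSpace} (hX : IsCompactRW X) (hY : IsCompactRW Y)
    (hV : IsCompactRW V) : dcGHP X V ≤ dcGHP X Y + dcGHP Y V := by
  refine le_of_forall_pos_le_add fun ε hε => ?_
  -- the three spaces are placed at the start of a sequence that is constant from then on
  let S : ℕ → RWSpace := fun n => match n with
    | 0 => X
    | 1 => Y
    | _ => V
  have hS : ∀ n, IsCompactRW (S n) := fun n => match n with
    | 0 => hX
    | 1 => hY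
    | _ + 2 => hV
  obtain ⟨W, _, _, _, _, _, φ, hφ, hcost⟩ := exists_chain S hS
    (fun n => dcGHP (S n) (S (n + 1)) + ε / 2) (fun n => by linarith)
  have h0 : cost X Y (φ 0) (φ 1) < dcGHP X Y + ε / 2 := hcost 0
  have h1 : cost Y V (φ 1) (φ 2) < dcGHP Y V + ε / 2 := hcost 1
  have h2 : dcGHP X V ≤ cost X V (φ 0) (φ 2) := dcGHP_le (hφ 0) (hφ 2)
  have h3 : cost X V (φ 0) (φ 2) ≤ cost X Y (φ 0) (φ 1) + cost Y V (φ 1) (φ 2) :=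
    cost_triangle hX hY hV (hφ 0) (hφ 1)
  linarith

end Cost

/-! ### Spaces at distance zero -/

section Zero

open TopologicalSpace

variable {X Y : RWSpace}

lemma of_cost_lt (hX : IsCompactRW X) (hY : IsCompactRW Y) {Z : Type} [MetricSpace Z]
    [MeasurableSpace Z] [BorelSpace Z] {f : X.carrier → Z} {g : Y.carrier → Z} (hf : Isometry f)
    (hg : Isometry g) {r : ℝ} (h : cost X Y f g < r) :
    (∀ x, ∃ y, dist (f x) (g y) < r) ∧ (∀ y, ∃ x, dist (f x) (g y) < r) ∧
      dist (f X.root) (g Y.root) < r ∧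
      levyProkhorovEDist (X.vol.map f) (Y.vol.map g) ≤ ENNReal.ofReal r := by
  have := hX.1
  have := hY.1
  have := hX.2
  have := hY.2
  have h1 : 0 ≤ hausdorffDist (range f) (range g) := hausdorffDist_nonneg
  have h2 : 0 ≤ dist (f X.root) (g Y.root) := dist_nonneg
  have h3 : 0 ≤ levyProkhorovDist (X.vol.map f) (Y.vol.map g) := ENNReal.toReal_nonneg
  unfold cost at h
  have hH : hausdorffDist (range f) (range g) < r := by linarith
  have hfin : hausdorffEDist (range f) (range g) ≠ ⊤ :=
    hausdorffEDist_ne_top_of_nonempty_of_bounded (range_nonempty _)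
      (range_nonempty _) (isCompact_range hf.continuous).isBounded
      (isCompact_range hg.continuous).isBounded
  refine ⟨fun x => ?_, fun y => ?_, by linarith, ?_⟩
  · obtain ⟨_, ⟨y, rfl⟩, hy⟩ := exists_dist_lt_of_hausdorffDist_lt (mem_range_self x) hH hfin
    exact ⟨y, hy⟩
  · obtain ⟨_, ⟨x, rfl⟩, hx⟩ := exists_dist_lt_of_hausdorffDist_lt' (mem_range_self y) hH hfin
    exact ⟨x, hx⟩
  · rw [← ENNReal.ofReal_toReal (levyProkhorovEDist_ne_top (X.vol.map f) (Y.vol.map g))]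
    refine ENNReal.ofReal_le_ofReal ?_
    unfold levyProkhorovDist at h
    linarith

lemma dcGHP_eq_zero_of_isometric (hY : IsCompactRW Y) (h : GHPIsometric X Y) : dcGHP X Y = 0 := by
  have := hY.1
  obtain ⟨e, he, hm⟩ := h
  refine le_antisymm ?_ (dcGHP_nonneg X Y)
  refine (dcGHP_le (f := e) (g := id) e.isometry isometry_id).trans ?_
  simp [cost, he, hm, e.surjective.range_eq, hausdorffDist_self_zero, levyProkhorovDist_self]

/-- Couplings of vanishing cost give in the limit (along an ultrafilter) a relation "`f n x` and
`g n y` become arbitrarily close" between `X` and `Y`, which is the graph of an isometry. -/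
lemma isometric_of_dcGHP_eq_zero (hX : IsCompactRW X) (hY : IsCompactRW Y) (h : dcGHP X Y = 0) :
    GHPIsometric X Y := by
  have := hX.1
  have := hY.1
  have := hX.2
  have := hY.2
  let ε : ℕ → ℝ := fun n => 1 / ((n : ℝ) + 1)
  have hε : ∀ n, 0 < ε n := fun n => Nat.one_div_pos_of_nat
  have hex : ∀ n, ∃ (Z : Type) (_ : MetricSpace Z) (_ : MeasurableSpace Z) (_ : BorelSpace Z)
      (f : X.carrier → Z) (g : Y.carrier → Z),
      Isometry f ∧ Isometry g ∧ cost X Y f g < ε n := by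
    intro n
    obtain ⟨c, ⟨Z, _, _, _, f, g, hf, hg, _, hs, rfl⟩, hlt⟩ :=
      exists_lt_of_csInf_lt (ghpSet_nonempty hX hY) (h.trans_lt (hε n))
    exact ⟨Z, _, _, ‹_›, f, g, hf, hg, hlt⟩
  choose Z mZ sZ bZ f g hf hg hlt using hex
  have H := fun n => of_cost_lt hX hY (hf n) (hg n) (hlt n)
  let U : Ultrafilter ℕ := hyperfilter ℕ
  have hεU : Tendsto ε U (𝓝 0) :=
    tendsto_one_div_add_atTop_nhds_zero_nat.mono_left Nat.hyperfilter_le_atTop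
  let R : X.carrier → Y.carrier → Prop := fun x y =>
    Tendsto (fun n => dist (f n x) (g n y)) U (𝓝 0)
  have hRdist : ∀ x y x' y', R x y → R x' y' → dist x x' = dist y y' := by
    intro x y x' y' h1 h2
    have h3 : Tendsto (fun n => dist (f n x) (g n y) + dist (f n x') (g n y')) U (𝓝 0) := by
      simpa using h1.add h2
    have h4 : |dist x x' - dist y y'| ≤ 0 := by
      refine ge_of_tendsto' h3 fun n => ?_
      rw [← (hf n).dist_eq, ← (hg n).dist_eq]
      exact dist_dist_dist_le (f n x) (f n x') (g n y) (g n y')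
    linarith [abs_nonpos_iff.1 h4]
  have hlim : ∀ {K : Type} [MetricSpace K] [CompactSpace K] (u : ℕ → K), ∃ a, Tendsto u U (𝓝 a) :=
    fun u => ⟨_, (U.map u).le_nhds_lim⟩
  have hp : ∀ x, ∃ y, R x y := by
    intro x
    choose u hu using fun n => (H n).1 x
    obtain ⟨y, hy⟩ := hlim u
    refine ⟨y, squeeze_zero (fun n => dist_nonneg) (fun n => ?_)
      (by simpa using hεU.add (tendsto_iff_dist_tendsto_zero.1 hy))⟩
    have := dist_triangle (f n x) (g n (u n)) (g n y)
    rw [(hg n).dist_eq] at this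
    linarith [hu n]
  have hq : ∀ y, ∃ x, R x y := by
    intro y
    choose u hu using fun n => (H n).2.1 y
    obtain ⟨x, hx⟩ := hlim u
    refine ⟨x, squeeze_zero (fun n => dist_nonneg) (fun n => ?_)
      (by simpa using hεU.add (tendsto_iff_dist_tendsto_zero.1 hx))⟩
    have := dist_triangle (f n x) (f n (u n)) (g n y)
    rw [(hf n).dist_eq, dist_comm x] at this
    linarith [hu n]
  have hroot : R X.root Y.root :=
    squeeze_zero (fun n => dist_nonneg) (fun n => (H n).2.2.1.le) hεU
  choose p hRp using hp
  have hpiso : Isometry p := Isometry.of_dist_eq fun x x' =>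
    (hRdist _ _ _ _ (hRp x) (hRp x')).symm
  have hRfun : ∀ x y, R x y → p x = y := fun x y hxy => by
    rw [← dist_eq_zero, ← hRdist _ _ _ _ (hRp x) hxy, dist_self]
  have hsurj : Function.Surjective p := fun y => (hq y).imp fun x hx => hRfun x y hx
  refine ⟨⟨Equiv.ofBijective p ⟨hpiso.injective, hsurj⟩, hpiso⟩, hRfun _ _ hroot, ?_⟩
  change X.vol.map p = Y.vol
  apply measure_eq_of_lpEDist_eq_zero
  -- by compactness, `f n x` and `g n (p x)` become close uniformly in `x`
  have hunif : ∀ η > 0, ∃ n, (∀ x, dist (g n (p x)) (f n x) ≤ 3 * η) ∧ ε n ≤ η := by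
    intro η hη
    obtain ⟨t, -, htf, ht⟩ := finite_cover_balls_of_compact (isCompact_univ (X := X.carrier)) hη
    have h1 : ∀ᶠ n in (U : Filter ℕ), ∀ x ∈ t, dist (f n x) (g n (p x)) < η :=
      (eventually_all_finite htf).2 fun x _ => (hRp x).eventually_lt_const hη
    obtain ⟨n, hn, hn'⟩ := (h1.and (hεU.eventually_lt_const hη)).exists
    refine ⟨n, fun x => ?_, hn'.le⟩
    obtain ⟨x', hx't, hx'⟩ := mem_iUnion₂.1 (ht (mem_univ x))
    have h2 := dist_triangle4 (g n (p x)) (g n (p x')) (f n x') (f n x)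
    rw [(hg n).dist_eq, hpiso.dist_eq, (hf n).dist_eq, dist_comm (g n (p x')), dist_comm x'] at h2
    linarith [hn x' hx't, mem_ball.1 hx']
  have hle : ∀ η > 0, levyProkhorovEDist (X.vol.map p) Y.vol ≤ ENNReal.ofReal (4 * η) := by
    intro η hη
    obtain ⟨n, hn, hn'⟩ := hunif η hη
    have hmg := (hg n).continuous.measurable
    have hmf := (hf n).continuous.measurable
    have hmp := hpiso.continuous.measurable
    calc levyProkhorovEDist (X.vol.map p) Y.vol
        = levyProkhorovEDist ((X.vol.map p).map (g n)) (Y.vol.map (g n)) :=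
          (lpEDist_map_eq (hg n) _ _).symm
      _ ≤ levyProkhorovEDist (X.vol.map (g n ∘ p)) (X.vol.map (f n))
          + levyProkhorovEDist (X.vol.map (f n)) (Y.vol.map (g n)) := by
          rw [Measure.map_map hmg hmp]
          exact levyProkhorovEDist_triangle _ _ _
      _ ≤ ENNReal.ofReal (3 * η) + ENNReal.ofReal (ε n) :=
          add_le_add (lpEDist_map_map_le _ (hmg.comp hmp) hmf hn) (H n).2.2.2
      _ ≤ ENNReal.ofReal (4 * η) := by
          rw [← ENNReal.ofReal_add (by linarith) (hε n).le]
          exact ENNReal.ofReal_le_ofReal (by linarith)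
  refine le_antisymm (ENNReal.le_of_forall_pos_le_add fun δ hδ _ => ?_) zero_le
  refine (hle (δ / 4) (by positivity)).trans ?_
  rw [zero_add, mul_div_cancel₀ _ (by norm_num), ENNReal.ofReal_coe_nnreal]

lemma equivalence_KRel : Equivalence KRel where
  refl X := isometric_of_dcGHP_eq_zero X.2 X.2 (dcGHP_self X.2)
  symm {X Y} h := isometric_of_dcGHP_eq_zero Y.2 X.2 <| by
    rw [dcGHP_comm, dcGHP_eq_zero_of_isometric Y.2 h]
  trans {X Y V} h h' := isometric_of_dcGHP_eq_zero X.2 V.2 <| le_antisymm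
    ((dcGHP_triangle X.2 Y.2 V.2).trans_eq (by
      rw [dcGHP_eq_zero_of_isometric Y.2 h, dcGHP_eq_zero_of_isometric V.2 h', add_zero]))
    (dcGHP_nonneg _ _)

end Zero

/-! ### The metric on isometry classes -/

/-- The metric on `KQuot` induced by `dcGHP`, computed on chosen representatives. -/
@[reducible]
noncomputable def kMetric : MetricSpace KQuot where
  dist p q := dcGHP p.out.1 q.out.1
  dist_self p := dcGHP_self p.out.2
  dist_comm p q := dcGHP_comm _ _
  dist_triangle p q r := dcGHP_triangle p.out.2 q.out.2 r.out.2
  eq_of_dist_eq_zero {p q} h := by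
    rw [← Quot.out_eq p, ← Quot.out_eq q]
    exact Quot.sound (isometric_of_dcGHP_eq_zero p.out.2 q.out.2 h)

lemma dcGHP_out (X : {X : RWSpace // IsCompactRW X}) :
    dcGHP (Quot.mk KRel X).out.1 X.1 = 0 :=
  dcGHP_eq_zero_of_isometric X.2
    (equivalence_KRel.eqvGen_iff.1 (Quot.eqvGen_exact (Quot.out_eq (Quot.mk KRel X))))

lemma mdist_mk (X Y : {X : RWSpace // IsCompactRW X}) :
    mdist kMetric (Quot.mk KRel X) (Quot.mk KRel Y) = dcGHP X.1 Y.1 := by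
  change dcGHP _ _ = _
  set X' := (Quot.mk KRel X).out with hX'
  set Y' := (Quot.mk KRel Y).out with hY'
  have h1 : dcGHP X'.1 X.1 = 0 := dcGHP_out X
  have h2 : dcGHP Y'.1 Y.1 = 0 := dcGHP_out Y
  have h3 := dcGHP_comm X'.1 X.1
  have h4 := dcGHP_comm Y'.1 Y.1
  have h5 := dcGHP_triangle X'.2 X.2 Y'.2
  have h6 := dcGHP_triangle X.2 Y.2 Y'.2
  have h7 := dcGHP_triangle X.2 X'.2 Y.2
  have h8 := dcGHP_triangle X'.2 Y'.2 Y.2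
  linarith

/-! ### Completeness -/

section Complete

open TopologicalSpace

/-- Measurable near-projection: a point of a separable set `K` is selected measurably within `η`
of each `φ x`, by taking the first admissible term of a dense sequence. -/
lemma exists_measurable_near {A W : Type} [MeasurableSpace A] [MetricSpace W] [MeasurableSpace W]
    [BorelSpace W] (K : Set W) [SeparableSpace K] {φ : A → W} (hφ : Measurable φ) {η : ℝ}
    (h : ∀ x, ∃ y ∈ K, dist (φ x) y < η) (hK : K.Nonempty) :
    ∃ q : A → K, Measurable q ∧ ∀ x, dist (φ x) (q x) ≤ η := by
  classical
  have := hK.to_subtype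
  have hex : ∀ x, ∃ k, dist (φ x) (denseSeq K k) < η := by
    intro x
    obtain ⟨y, hy, hxy⟩ := h x
    have ho : IsOpen {w : K | dist (φ x) w < η} :=
      isOpen_lt (continuous_const.dist continuous_subtype_val) continuous_const
    exact (denseRange_denseSeq K).exists_mem_open ho ⟨⟨y, hy⟩, hxy⟩
  refine ⟨fun x => denseSeq K (Nat.find (hex x)), (Measurable.of_discrete
    (f := denseSeq K)).comp (measurable_find hex fun k => ?_), fun x => (Nat.find_spec (hex x)).le⟩
  have ho : IsOpen {w : W | dist w (denseSeq K k) < η} :=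
    isOpen_lt (continuous_id.dist continuous_const) continuous_const
  exact hφ ho.measurableSet

/-- A sequence of compact spaces with geometrically small successive distances has a compact limit:
the Hausdorff limit of its images in a common Polish space. -/
lemma exists_limit (X : ℕ → RWSpace) (hX : ∀ n, IsCompactRW (X n))
    (h : ∀ n, dcGHP (X n) (X (n + 1)) < (1 / 2) ^ n) :
    ∃ L : RWSpace, IsCompactRW L ∧ ∀ n, dcGHP (X n) L ≤ 15 * (1 / 2) ^ n := by
  obtain ⟨W, _, _, _, _, _, φ, hφ, hcost⟩ := exists_chain X hX _ h
  have := fun n => (hX n).1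
  have := fun n => (hX n).2
  have hpos : ∀ n : ℕ, (0 : ℝ) < (1 / 2) ^ n := fun n => by positivity
  have H := fun n => of_cost_lt (hX n) (hX (n + 1)) (hφ n) (hφ (n + 1)) (hcost n)
  let K : ℕ → NonemptyCompacts W := fun n =>
    ⟨⟨range (φ n), isCompact_range (hφ n).continuous⟩, range_nonempty _⟩
  have hKd : ∀ n, dist (K n) (K (n + 1)) ≤ 1 * (1 / 2) ^ n := by
    intro n
    rw [one_mul]
    refine le_trans ?_ (hcost n).le
    have h1 : 0 ≤ dist (φ n (X n).root) (φ (n + 1) (X (n + 1)).root) := dist_nonneg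
    have h2 : 0 ≤ levyProkhorovDist ((X n).vol.map (φ n)) ((X (n + 1)).vol.map (φ (n + 1))) :=
      ENNReal.toReal_nonneg
    change hausdorffDist (range (φ n)) (range (φ (n + 1))) ≤ _
    unfold cost
    linarith
  obtain ⟨L, hL⟩ := cauchySeq_tendsto_of_complete
    (cauchySeq_of_le_geometric (1 / 2) 1 (by norm_num) hKd)
  have hLd : ∀ n, dist (K n) L ≤ 2 * (1 / 2) ^ n := fun n =>
    (dist_le_of_le_geometric_of_tendsto (1 / 2) 1 (by norm_num) hKd hL n).trans_eq (by ring)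
  have hzd : ∀ n, dist (φ n (X n).root) (φ (n + 1) (X (n + 1)).root) ≤ 1 * (1 / 2) ^ n :=
    fun n => by rw [one_mul]; exact (H n).2.2.1.le
  obtain ⟨z, hz⟩ := cauchySeq_tendsto_of_complete
    (cauchySeq_of_le_geometric (1 / 2) 1 (by norm_num) hzd)
  have hzd' : ∀ n, dist (φ n (X n).root) z ≤ 2 * (1 / 2) ^ n := fun n =>
    (dist_le_of_le_geometric_of_tendsto (1 / 2) 1 (by norm_num) hzd hz n).trans_eq (by ring)
  have hfin : ∀ n, hausdorffEDist (range (φ n)) (L : Set W) ≠ ⊤ := fun n =>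
    hausdorffEDist_ne_top_of_nonempty_of_bounded (range_nonempty _) L.nonempty
      (isCompact_range (hφ n).continuous).isBounded L.isCompact.isBounded
  have hLh : ∀ n, hausdorffDist (range (φ n)) (L : Set W) ≤ 2 * (1 / 2) ^ n := hLd
  have hnear : ∀ n x, ∃ y ∈ (L : Set W), dist (φ n x) y < 3 * (1 / 2) ^ n := fun n x =>
    exists_dist_lt_of_hausdorffDist_lt (mem_range_self x)
      ((hLh n).trans_lt (by linarith [hpos n])) (hfin n)
  have h0 : ∀ c : ℝ, Tendsto (fun n : ℕ => c * (1 / 2 : ℝ) ^ n) atTop (𝓝 0) := fun c => by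
    simpa using (tendsto_pow_atTop_nhds_zero_of_lt_one (r := (1 / 2 : ℝ)) (by norm_num)
      (by norm_num)).const_mul c
  have hzL : z ∈ (L : Set W) := by
    refine (L.isCompact.isClosed.mem_iff_infDist_zero L.nonempty).2 (le_antisymm ?_ infDist_nonneg)
    refine ge_of_tendsto' (h0 5) fun n => ?_
    obtain ⟨y, hy, hxy⟩ := hnear n (X n).root
    have h1 := infDist_le_dist_of_mem (x := z) hy
    have h2 := dist_triangle_left z y (φ n (X n).root)
    linarith [hzd' n]
  have hcL : CompactSpace (L : Set W) := isCompact_iff_compactSpace.1 L.isCompact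
  choose q hqm hqd using fun n => exists_measurable_near (L : Set W)
    (hφ n).continuous.measurable (hnear n) L.nonempty
  have hφm : ∀ n, Measurable (φ n) := fun n => (hφ n).continuous.measurable
  -- the measures transported to the limit set are Cauchy there, which gives the limit measure
  let ν : ℕ → Measure (L : Set W) := fun n => (X n).vol.map (q n)
  have hval : ∀ n, (ν n).map Subtype.val = (X n).vol.map (fun x => (q n x : W)) := fun n =>
    Measure.map_map measurable_subtype_coe (hqm n)
  have hνφ : ∀ n, levyProkhorovEDist ((X n).vol.map (φ n)) ((ν n).map Subtype.val) ≤
      ENNReal.ofReal (3 * (1 / 2) ^ n) := fun n => by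
    rw [hval]
    exact lpEDist_map_map_le _ (hφm n) (measurable_subtype_coe.comp (hqm n)) (hqd n)
  have hφφ : ∀ n m, n ≤ m → levyProkhorovEDist ((X n).vol.map (φ n)) ((X m).vol.map (φ m)) ≤
      ENNReal.ofReal (2 * (1 / 2) ^ n - 2 * (1 / 2) ^ m) := by
    intro n m hnm
    induction m, hnm using Nat.le_induction with
    | base => simp [levyProkhorovEDist_self]
    | succ m hnm ih =>
      refine (levyProkhorovEDist_triangle _ ((X m).vol.map (φ m)) _).trans
        ((add_le_add ih (H m).2.2.2).trans ?_)
      have h1 : (1 / 2 : ℝ) ^ m ≤ (1 / 2) ^ n :=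
        pow_le_pow_of_le_one (by norm_num) (by norm_num) hnm
      rw [← ENNReal.ofReal_add (by linarith) (hpos m).le]
      exact ENNReal.ofReal_le_ofReal (by rw [pow_succ]; linarith)
  obtain ⟨ρ, hρf, hρ⟩ := exists_lp_limit ν (fun n => ENNReal.ofReal (8 * (1 / 2) ^ n))
    (fun n => ENNReal.ofReal_ne_top) fun n m hnm => by
      have h1 : (1 / 2 : ℝ) ^ m ≤ (1 / 2) ^ n :=
        pow_le_pow_of_le_one (by norm_num) (by norm_num) hnm
      rw [← lpEDist_map_eq (isometry_subtype_coe (s := (L : Set W)))]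
      refine (levyProkhorovEDist_triangle _ ((X n).vol.map (φ n)) _).trans ?_
      refine (add_le_add_right (levyProkhorovEDist_triangle _ ((X m).vol.map (φ m)) _) _).trans ?_
      rw [levyProkhorovEDist_comm _ ((X n).vol.map (φ n))]
      refine (add_le_add (hνφ n) (add_le_add (hφφ n m hnm) (hνφ m))).trans ?_
      rw [← ENNReal.ofReal_add (by linarith) (by linarith [hpos m]),
        ← ENNReal.ofReal_add (by linarith [hpos n]) (by linarith [hpos m])]
      exact ENNReal.ofReal_le_ofReal (by linarith [hpos m])
  refine ⟨⟨(L : Set W), ⟨z, hzL⟩, ρ⟩, ⟨hcL, hρf⟩, fun n => ?_⟩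
  refine (dcGHP_le (hφ n) isometry_subtype_coe).trans ?_
  have h1 : levyProkhorovDist ((X n).vol.map (φ n)) (ρ.map Subtype.val) ≤ 11 * (1 / 2) ^ n := by
    refine ENNReal.toReal_le_of_le_ofReal (by linarith [hpos n]) ?_
    refine (levyProkhorovEDist_triangle _ ((ν n).map Subtype.val) _).trans
      ((add_le_add (hνφ n) ((lpEDist_map_le isometry_subtype_coe _ _).trans (hρ n))).trans ?_)
    rw [← ENNReal.ofReal_add (by linarith [hpos n]) (by linarith [hpos n])]
    exact ENNReal.ofReal_le_ofReal (by linarith)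
  unfold cost
  change hausdorffDist _ (range (Subtype.val : ↥(L : Set W) → W)) + dist _ z + _ ≤ _
  rw [Subtype.range_coe]
  have h2 := hLh n
  have h3 := hzd' n
  change _ + _ + levyProkhorovDist ((X n).vol.map (φ n)) (ρ.map Subtype.val) ≤ _
  linarith

lemma complete_kMetric : MSComplete kMetric := by
  let := kMetric
  refine Metric.complete_of_convergent_controlled_sequences (fun n => (1 / 2 : ℝ) ^ n)
    (fun n => by positivity) fun u hu => ?_
  obtain ⟨L, hL, hle⟩ := exists_limit (fun n => (u n).out.1) (fun n => (u n).out.2)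
    fun n => hu n n (n + 1) le_rfl n.le_succ
  have h0 : Tendsto (fun n : ℕ => 15 * (1 / 2 : ℝ) ^ n) atTop (𝓝 0) := by
    simpa using (tendsto_pow_atTop_nhds_zero_of_lt_one (r := (1 / 2 : ℝ)) (by norm_num)
      (by norm_num)).const_mul 15
  refine ⟨Quot.mk KRel ⟨L, hL⟩, tendsto_iff_dist_tendsto_zero.2 ?_⟩
  refine squeeze_zero (fun n => dist_nonneg) (fun n => ?_) h0
  refine le_trans (le_of_eq ?_) (hle n)
  conv_lhs => rw [← Quot.out_eq (u n)]
  exact mdist_mk (u n).out ⟨L, hL⟩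

end Complete

/-! ### Separability -/

section Separable

open TopologicalSpace

/-- Every compact metric space is a continuous image of the Cantor space, hence embeds
isometrically in the continuous functions on the Cantor space through its distance functions. -/
lemma exists_isometry_cantor (A : Type) [MetricSpace A] [CompactSpace A] [Nonempty A] :
    ∃ f : A → C(ℕ → Bool, ℝ), Isometry f := by
  obtain ⟨π, hπ, hs⟩ := exists_nat_bool_continuous_surjective_of_compact A
  refine ⟨fun x => ⟨fun t => dist x (π t), continuous_const.dist hπ⟩,
    Isometry.of_dist_eq fun x y => le_antisymm ?_ ?_⟩
  · exact (ContinuousMap.dist_le dist_nonneg).2 fun t => dist_dist_dist_le_left x y (π t)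
  · obtain ⟨t, ht⟩ := hs y
    have := ContinuousMap.dist_apply_le_dist (f := (⟨fun t => dist x (π t),
      continuous_const.dist hπ⟩ : C(ℕ → Bool, ℝ))) (g := ⟨fun t => dist y (π t),
      continuous_const.dist hπ⟩) t
    simpa [ht] using this

/-- The measure on `Fin N` whose masses are the terms of index `w i` of a dense sequence of
nonnegative reals. -/
noncomputable def finMeasure {N : ℕ} (w : Fin N → ℕ) : Measure (Fin N) :=
  Measure.count.withDensity fun i => (denseSeq ℝ≥0 (w i) : ℝ≥0∞)

lemma finMeasure_singleton {N : ℕ} (w : Fin N → ℕ) (i : Fin N) :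
    finMeasure w {i} = denseSeq ℝ≥0 (w i) := by
  rw [finMeasure, withDensity_apply _ (measurableSet_singleton i), lintegral_singleton,
    Measure.count_singleton, mul_one]

instance {N : ℕ} (w : Fin N → ℕ) : IsFiniteMeasure (finMeasure w) := by
  refine ⟨?_⟩
  rw [← Finset.coe_univ, ← sum_measure_singleton]
  exact ENNReal.sum_lt_top.2 fun i _ => by rw [finMeasure_singleton]; exact ENNReal.coe_lt_top

lemma measure_fin_le {N : ℕ} (σ ρ : Measure (Fin N)) {δ : ℝ≥0∞} (h : ∀ i, σ {i} ≤ ρ {i} + δ)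
    (A : Set (Fin N)) : σ A ≤ ρ A + N * δ := by
  classical
  rw [← coe_toFinset A, ← sum_measure_singleton, ← sum_measure_singleton]
  calc ∑ i ∈ A.toFinset, σ {i} ≤ ∑ i ∈ A.toFinset, (ρ {i} + δ) := Finset.sum_le_sum fun i _ => h i
    _ = ∑ i ∈ A.toFinset, ρ {i} + A.toFinset.card * δ := by
      rw [Finset.sum_add_distrib, Finset.sum_const, nsmul_eq_mul]
    _ ≤ _ := by
      gcongr
      exact (Finset.card_le_univ _).trans_eq (Fintype.card_fin N)

variable (U : Type) [MetricSpace U] [MeasurableSpace U] [BorelSpace U] [SeparableSpace U]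
  [Nonempty U]

/-- A finite rooted weighted space, described by countably many parameters: its points and masses
are terms of fixed dense sequences of `U` and of the nonnegative reals. -/
noncomputable def finSpace {N : ℕ} (a : Fin N → ℕ) (i₀ : Fin N) (w : Fin N → ℕ) : RWSpace where
  carrier := range fun i => denseSeq U (a i)
  root := ⟨_, mem_range_self i₀⟩
  vol := (finMeasure w).map fun i => ⟨denseSeq U (a i), mem_range_self i⟩

lemma isCompactRW_finSpace {N : ℕ} (a : Fin N → ℕ) (i₀ : Fin N) (w : Fin N → ℕ) :
    IsCompactRW (finSpace U a i₀ w) :=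
  ⟨inferInstanceAs (CompactSpace (range fun i => denseSeq U (a i))),
    Measure.isFiniteMeasure_map (finMeasure w) _⟩

/-- The points of the finite space are terms of the dense sequence near an `ε`-net of `X`; its masses
approximate those which a measurable near-projection onto these points transports from `X`. -/
lemma exists_finSpace_near [CompleteSpace U] {X : RWSpace} (hX : IsCompactRW X)
    {Φ : X.carrier → U} (hΦ : Isometry Φ) {ε : ℝ} (hε : 0 < ε) :
    ∃ (N : ℕ) (a : Fin N → ℕ) (i₀ : Fin N) (w : Fin N → ℕ),
      dcGHP X (finSpace U a i₀ w) ≤ 6 * ε := by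
  have := hX.1
  have := hX.2
  obtain ⟨t, -, htf, ht⟩ := finite_cover_balls_of_compact (isCompact_univ (X := X.carrier)) hε
  have : Finite ↥(insert X.root t) := htf.insert X.root
  obtain ⟨N, ⟨e⟩⟩ := Finite.exists_equiv_fin ↥(insert X.root t)
  let c : Fin N → X.carrier := fun i => e.symm i
  have hc : ∀ x ∈ insert X.root t, ∃ i, c i = x := fun x hx => ⟨e ⟨x, hx⟩, by simp [c]⟩
  obtain ⟨i₀, hi₀⟩ := hc _ (mem_insert _ _)
  choose a ha using fun i => (denseRange_denseSeq U).exists_dist_lt (Φ (c i)) hε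
  let F : Set U := range fun i => denseSeq U (a i)
  let p : Fin N → F := fun i => ⟨denseSeq U (a i), mem_range_self i⟩
  have hpm : Measurable p := Measurable.of_discrete
  have hnear : ∀ x, ∃ y ∈ F, dist (Φ x) y < 2 * ε := by
    intro x
    obtain ⟨x', hx't, hx'⟩ := mem_iUnion₂.1 (ht (mem_univ x))
    obtain ⟨i, hi⟩ := hc x' (mem_insert_of_mem _ hx't)
    refine ⟨_, mem_range_self i, ?_⟩
    have h1 := dist_triangle (Φ x) (Φ (c i)) (denseSeq U (a i))
    rw [hΦ.dist_eq, hi] at h1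
    have h2 := ha i
    rw [hi] at h2
    linarith [mem_ball.1 hx']
  have hnear' : ∀ y ∈ F, ∃ x, dist (Φ x) y < ε := by
    rintro _ ⟨i, rfl⟩
    exact ⟨c i, ha i⟩
  obtain ⟨q, hq, hqd⟩ := exists_measurable_near F hΦ.continuous.measurable hnear
    ⟨_, mem_range_self i₀⟩
  -- `q` factors measurably through the index set
  have hsec : ∀ y : F, ∃ i, p i = y := fun ⟨_, i, hi⟩ => ⟨i, Subtype.ext hi⟩
  choose s hs using hsec
  have hj : Measurable (s ∘ q) := (measurable_of_countable s).comp hq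
  have hpj : p ∘ s ∘ q = q := funext fun x => hs (q x)
  let σ : Measure (Fin N) := X.vol.map (s ∘ q)
  let δ : ℝ := ε / (N + 1)
  have hδ : 0 < δ := by positivity
  -- the errors made on the `N` masses add up to at most `ε`
  choose w hw using fun i => (denseRange_denseSeq ℝ≥0).exists_dist_lt (σ {i}).toNNReal hδ
  have hσ : ∀ i, ((σ {i}).toNNReal : ℝ≥0∞) = σ {i} := fun i =>
    ENNReal.coe_toNNReal (measure_ne_top _ _)
  have key : ∀ x y : ℝ≥0, dist x y < δ → (x : ℝ≥0∞) ≤ y + ENNReal.ofReal δ := by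
    intro x y hxy
    rw [NNReal.dist_eq] at hxy
    rw [← ENNReal.ofReal_coe_nnreal, ← ENNReal.ofReal_coe_nnreal,
      ← ENNReal.ofReal_add y.coe_nonneg hδ.le]
    exact ENNReal.ofReal_le_ofReal (by linarith [(abs_lt.1 hxy).2])
  have hNδ : (N : ℝ≥0∞) * ENNReal.ofReal δ ≤ ENNReal.ofReal ε := by
    rw [← ENNReal.ofReal_natCast, ← ENNReal.ofReal_mul N.cast_nonneg]
    refine ENNReal.ofReal_le_ofReal ?_
    rw [mul_div_assoc', div_le_iff₀ (by positivity)]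
    nlinarith
  have hlp : levyProkhorovEDist (X.vol.map q) ((finMeasure w).map p) ≤ ENNReal.ofReal ε := by
    have hmap : X.vol.map q = σ.map p := by rw [Measure.map_map hpm hj, hpj]
    rw [hmap]
    refine (lpEDist_le_of_forall_le_add _ _ (N * ENNReal.ofReal δ) fun B hB => ?_).trans hNδ
    rw [Measure.map_apply hpm hB, Measure.map_apply hpm hB]
    constructor
    · refine measure_fin_le _ _ (fun i => ?_) _
      rw [finMeasure_singleton, ← hσ]
      exact key _ _ (hw i)
    · refine measure_fin_le _ _ (fun i => ?_) _
      rw [finMeasure_singleton, ← hσ]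
      exact key _ _ (by rw [dist_comm]; exact hw i)
  have hLP : levyProkhorovDist (X.vol.map Φ) (((finMeasure w).map p).map Subtype.val) ≤ 3 * ε := by
    refine ENNReal.toReal_le_of_le_ofReal (by linarith) ?_
    refine (levyProkhorovEDist_triangle _ ((X.vol.map q).map Subtype.val) _).trans ?_
    refine (add_le_add ?_ ((lpEDist_map_le isometry_subtype_coe _ _).trans hlp)).trans_eq
      (b := ENNReal.ofReal (2 * ε) + ENNReal.ofReal ε) ?_
    · rw [Measure.map_map measurable_subtype_coe hq]
      exact lpEDist_map_map_le _ hΦ.continuous.measurable (measurable_subtype_coe.comp hq) hqd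
    · rw [← ENNReal.ofReal_add (by linarith) hε.le]
      congr 1
      ring
  have hH : hausdorffDist (range Φ) F ≤ 2 * ε := by
    refine hausdorffDist_le_of_mem_dist (by linarith) ?_ ?_
    · rintro _ ⟨x, rfl⟩
      obtain ⟨y, hy, hxy⟩ := hnear x
      exact ⟨y, hy, hxy.le⟩
    · intro y hy
      obtain ⟨x, hx⟩ := hnear' y hy
      exact ⟨_, mem_range_self x, by rw [dist_comm]; linarith⟩
  have hroot : dist (Φ X.root) (denseSeq U (a i₀)) ≤ ε := by
    rw [← hi₀]
    exact (ha i₀).le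
  refine ⟨N, a, i₀, w, ?_⟩
  refine (dcGHP_le (Y := finSpace U a i₀ w) hΦ (isometry_subtype_coe (s := F))).trans ?_
  unfold cost
  change hausdorffDist _ (range (Subtype.val : ↥F → U)) + dist _ (denseSeq U (a i₀)) +
    levyProkhorovDist _ (((finMeasure w).map p).map Subtype.val) ≤ _
  rw [Subtype.range_coe]
  linarith

lemma separable_kMetric : MSSeparable kMetric := by
  let := kMetric
  let U := C(ℕ → Bool, ℝ)
  let : MeasurableSpace U := borel U
  have : BorelSpace U := ⟨rfl⟩
  let T := Σ N : ℕ, (Fin N → ℕ) × Fin N × (Fin N → ℕ)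
  let G : T → KQuot := fun τ =>
    Quot.mk KRel ⟨finSpace U τ.2.1 τ.2.2.1 τ.2.2.2, isCompactRW_finSpace U _ _ _⟩
  refine ⟨range G, countable_range G, Metric.dense_iff.2 fun x r hr => ?_⟩
  obtain ⟨X, rfl⟩ := Quot.exists_rep x
  have := X.2.1
  obtain ⟨Φ, hΦ⟩ := exists_isometry_cantor X.1.carrier
  obtain ⟨N, a, i₀, w, h⟩ := exists_finSpace_near U X.2 hΦ (ε := r / 12) (by positivity)
  refine ⟨G ⟨N, a, i₀, w⟩, mem_ball'.2 ?_, mem_range_self _⟩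
  refine lt_of_eq_of_lt (mdist_mk X ⟨finSpace U a i₀ w, isCompactRW_finSpace U _ _ _⟩) ?_
  change dcGHP X.1 (finSpace U a i₀ w) < r
  linarith

end Separable

end GHP

/-- Theorem 2.3 (Abraham–Delmas–Hoscheit): `d^c_GHP` is a well-defined finite metric on 𝕂
(it vanishes exactly on GHP-isometric pairs, is symmetric and satisfies the triangle
inequality), and `(𝕂, d^c_GHP)` is a Polish (complete separable) metric space. -/
theorem dcGHP_isMetric_and_polish :
    (∀ X Y : {X : RWSpace // IsCompactRW X},
      (ghpSet X.1 Y.1).Nonempty ∧ BddBelow (ghpSet X.1 Y.1)) ∧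
    (∀ X Y : {X : RWSpace // IsCompactRW X},
      (dcGHP X.1 Y.1 = 0 ↔ GHPIsometric X.1 Y.1)) ∧
    (∀ X Y : {X : RWSpace // IsCompactRW X}, dcGHP X.1 Y.1 = dcGHP Y.1 X.1) ∧
    (∀ X Y Z : {X : RWSpace // IsCompactRW X},
      dcGHP X.1 Z.1 ≤ dcGHP X.1 Y.1 + dcGHP Y.1 Z.1) ∧
    Equivalence KRel ∧
    ∃ m : MetricSpace KQuot,
      (∀ X Y : {X : RWSpace // IsCompactRW X},
        mdist m (Quot.mk KRel X) (Quot.mk KRel Y) = dcGHP X.1 Y.1) ∧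
      MSComplete m ∧ MSSeparable m := by
  refine ⟨fun X Y => ⟨GHP.ghpSet_nonempty X.2 Y.2, 0, fun _ => GHP.ghpSet_nonneg⟩,
    fun X Y => ⟨GHP.isometric_of_dcGHP_eq_zero X.2 Y.2, GHP.dcGHP_eq_zero_of_isometric Y.2⟩,
    fun X Y => GHP.dcGHP_comm _ _, fun X Y Z => GHP.dcGHP_triangle X.2 Y.2 Z.2,
    GHP.equivalence_KRel, GHP.kMetric, GHP.mdist_mk, GHP.complete_kMetric,
    GHP.separable_kMetric⟩
end

section
/- For any two rooted weighted complete locally compact length spaces X and Y, the map r ↦ d^c_GHP(X^(r), Y^(r)) from [0,∞) to [0,∞) is càdlàg (right-continuous with left limits). Consequently the integral d_GHP(X,Y) = ∫_0^∞ e^{−r} (1 ∧ d^c_GHP(X^(r), Y^(r))) dr is well defined. -/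
/-!
The distance between the balls `X^(r)` and `Y^(r)` has its variation controlled by a monotone
function. Write `f r` for this distance and
`G r = 2 r + μ_X (X^(r)) + μ_Y (Y^(r))` for `r ≥ 0` (`gaugeSum`, extended by `G 0` to negative
radii). The core estimate is `|f s - f r| ≤ |G s - G r|` (`dcGHP_restrict_le`).

To prove it, take an almost optimal embedding of `X^(r)` and `Y^(r)` in a Polish space `Z` and glue
the whole of `X` and `Y` to `Z` along these balls (`exists_ballCost_le`). In the glued space, which
is again Polish, the balls of any other radius `s` are embedded too. As `X` is a length space, the
balls of radii `r` and `s` are at Hausdorff distance at most `|s - r|`, and the Prohorov distance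
of the restrictions of `μ_X` to them is at most the measure of their difference; likewise for `Y`.
The triangle inequality in the glued space concludes.

The Hopf–Rinow theorem (`IsLengthSpace.properSpace`) makes `X` and `Y` proper. Hence they are
separable, balls have finite measure, and `G` is finite, monotone and right-continuous.

The core estimate means that `f = φ ∘ G` with `φ` Lipschitz (`exists_continuous_comp`). Right
continuity, left limits and measurability of `f` thus follow from those of `G`, and integrability
follows from measurability by domination by `exp (-r)`.
-/

open Metric Set

open MeasureTheory

/-! ### Length spaces: proximity of concentric balls and compactness -/

/-- In a length space, a point within `r + h` of `o` is within `h + ε` of the ball of radius `r`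
around `o`: follow an almost shortest curve from `o` until it leaves that ball. -/
lemma IsLengthSpace.exists_mem_closedBall {E : Type} [MetricSpace E] (hE : IsLengthSpace E)
    (o x : E) {r h ε : ℝ} (hr : 0 ≤ r) (hh : 0 ≤ h) (hε : 0 < ε) (hx : dist o x ≤ r + h) :
    ∃ y, y ∈ closedBall o r ∧ dist y x < h + ε := by
  by_cases hxr : dist o x ≤ r
  · exact ⟨x, by rwa [mem_closedBall, dist_comm], by simpa using by linarith⟩
  push Not at hxr
  have hlt : edist o x < edist o x + ENNReal.ofReal ε :=
    ENNReal.lt_add_right (edist_ne_top _ _) (by simpa using hε)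
  conv_lhs at hlt => rw [hE o x]
  simp only [iInf_lt_iff] at hlt
  obtain ⟨γ, hγ, h0, h1, hlen⟩ := hlt
  have hc : ContinuousOn (fun t => dist o (γ t)) (Set.Icc 0 1) := by fun_prop
  obtain ⟨t, ht, htr⟩ : r ∈ (fun t => dist o (γ t)) '' Set.Icc (0:ℝ) 1 := by
    apply intermediate_value_Icc zero_le_one hc
    simp only [h0, h1, dist_self]
    exact ⟨hr, hxr.le⟩
  simp only at htr
  refine ⟨γ t, by rw [mem_closedBall, dist_comm, htr], ?_⟩
  have hsum := eVariationOn.Icc_add_Icc γ (s := Set.Icc (0:ℝ) 1) ht.1 ht.2 ht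
  have e1 : edist o (γ t) ≤ eVariationOn γ (Set.Icc (0:ℝ) 1 ∩ Set.Icc 0 t) := by
    rw [← h0]
    exact eVariationOn.edist_le _ ⟨by simp, by simp [ht.1]⟩ ⟨ht, by simp [ht.1]⟩
  have e2 : edist (γ t) x ≤ eVariationOn γ (Set.Icc (0:ℝ) 1 ∩ Set.Icc t 1) := by
    rw [← h1]
    exact eVariationOn.edist_le _ ⟨ht, by simp [ht.2]⟩ ⟨by simp, by simp [ht.2]⟩
  rw [Set.inter_self] at hsum
  have e3 : edist o (γ t) + edist (γ t) x < edist o x + ENNReal.ofReal ε :=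
    (add_le_add e1 e2).trans_lt (hsum ▸ hlen)
  rw [edist_dist, edist_dist, edist_dist, ← ENNReal.ofReal_add dist_nonneg dist_nonneg,
    ← ENNReal.ofReal_add dist_nonneg hε.le,
    ENNReal.ofReal_lt_ofReal_iff (add_pos_of_nonneg_of_pos dist_nonneg hε)] at e3
  linarith

/-- The Hopf–Rinow (Cohn-Vossen) theorem. If some closed ball around `o` were not compact, the
supremum `R` of the radii of compact balls would be finite; the ball of radius `R` is totally
bounded, hence compact, and then local compactness yields a larger compact ball. -/
lemma IsLengthSpace.properSpace {E : Type} [MetricSpace E] (hE : IsLengthSpace E)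
    [CompleteSpace E] [LocallyCompactSpace E] : ProperSpace E := by
  refine ⟨fun o R₀ => ?_⟩
  by_contra hR₀
  set S : Set ℝ := {ρ | IsCompact (closedBall o ρ)} with hS
  have hdown : ∀ ρ ∈ S, ∀ ρ' ≤ ρ, ρ' ∈ S := fun ρ hρ ρ' h =>
    IsCompact.of_isClosed_subset hρ isClosed_closedBall (closedBall_subset_closedBall h)
  have h0 : (0:ℝ) ∈ S := by simp [hS]
  have hbdd : BddAbove S := ⟨R₀, fun ρ hρ => by
    by_contra h
    exact hR₀ (hdown ρ hρ R₀ (not_le.mp h).le)⟩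
  set R := sSup S with hR
  have hR0 : 0 ≤ R := le_csSup hbdd h0
  have hRc : IsCompact (closedBall o R) := by
    refine TotallyBounded.isCompact_of_isClosed ?_ isClosed_closedBall
    rw [Metric.totallyBounded_iff]
    intro ε hε
    obtain ⟨ρ, hρS, hρ⟩ := exists_lt_of_lt_csSup ⟨0, h0⟩ (show R - ε / 4 < sSup S by linarith)
    have hρS' : max ρ 0 ∈ S := by rcases max_choice ρ 0 with h | h <;> rw [h] <;> assumption
    obtain ⟨t, ht, hcov⟩ := Metric.totallyBounded_iff.mp
      (IsCompact.totallyBounded hρS') (ε / 2) (by linarith)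
    refine ⟨t, ht, fun x hx => ?_⟩
    rw [mem_closedBall, dist_comm] at hx
    obtain ⟨y, hy, hyx⟩ := hE.exists_mem_closedBall o x (r := max ρ 0) (h := ε / 4) (ε := ε / 4)
      (le_max_right _ _) (by linarith) (by linarith) (by linarith [le_max_left ρ 0])
    have := hcov hy
    simp only [mem_iUnion, mem_ball, exists_prop] at this ⊢
    obtain ⟨z, hz, hyz⟩ := this
    exact ⟨z, hz, by linarith [dist_triangle x y z, dist_comm x y]⟩
  obtain ⟨δ, hδ, hδc⟩ := hRc.exists_isCompact_cthickening
  have : R + δ / 2 ∈ S := by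
    refine IsCompact.of_isClosed_subset hδc isClosed_closedBall fun x hx => ?_
    rw [mem_closedBall, dist_comm] at hx
    obtain ⟨y, hy, hyx⟩ := hE.exists_mem_closedBall o x (ε := δ / 4) hR0 (by linarith)
      (by linarith) hx
    exact mem_cthickening_of_dist_le x y δ _ hy (by rw [dist_comm]; linarith)
  linarith [le_csSup hbdd this]

lemma IsLLC.properSpace {X : RWSpace} (hX : IsLLC X) : ProperSpace X.carrier :=
  haveI := hX.1
  haveI := hX.2.1
  IsLengthSpace.properSpace hX.2.2.1

lemma IsLLC.vol_closedBall_ne_top {X : RWSpace} (hX : IsLLC X) (r : ℝ) :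
    X.vol (closedBall X.root r) ≠ ⊤ :=
  haveI := hX.properSpace
  haveI := hX.2.2.2
  (isCompact_closedBall _ _).measure_ne_top

lemma IsLLC.isFiniteMeasure_restrict {X : RWSpace} (hX : IsLLC X) (r : ℝ) :
    IsFiniteMeasure (X.vol.restrict (closedBall X.root r)) :=
  ⟨by simpa using (hX.vol_closedBall_ne_top r).lt_top⟩

/-! ### Hausdorff and Prohorov estimates -/

lemma hausdorffDist_image_closedBall_le {E Z : Type} [MetricSpace E] [MetricSpace Z]
    (hE : IsLengthSpace E) {A : E → Z} (hA : Isometry A) (o : E) {r s : ℝ} (hr : 0 ≤ r)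
    (hrs : r ≤ s) :
    hausdorffDist (A '' closedBall o r) (A '' closedBall o s) ≤ s - r := by
  rw [hausdorffDist_image hA]
  refine le_of_forall_pos_le_add fun ε hε => ?_
  refine hausdorffDist_le_of_mem_dist (by linarith) (fun x hx => ?_) fun x hx => ?_
  · exact ⟨x, closedBall_subset_closedBall hrs hx, by rw [dist_self]; linarith⟩
  · rw [mem_closedBall, dist_comm] at hx
    obtain ⟨y, hy, hyx⟩ := hE.exists_mem_closedBall o x (h := s - r) hr (by linarith) hε
      (by linarith)
    exact ⟨y, hy, by rw [dist_comm]; exact hyx.le⟩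

/-- For nested measures the Prohorov distance is at most the difference of the total masses. -/
lemma levyProkhorovEDist_le_of_le {Z : Type} [MetricSpace Z] [MeasurableSpace Z]
    {μ ν : Measure Z} [IsFiniteMeasure ν] (hμν : μ ≤ ν) {δ : ENNReal}
    (h : ν Set.univ ≤ μ Set.univ + δ) : levyProkhorovEDist μ ν ≤ δ := by
  refine levyProkhorovEDist_le_of_forall _ _ _ fun ε B hε hε' hB => ?_
  have hsub : B ⊆ thickening ε.toReal B :=
    self_subset_thickening (ENNReal.toReal_pos (bot_lt_of_lt hε).ne' hε'.ne) B
  refine ⟨((hμν B).trans (measure_mono hsub)).trans le_self_add, ?_⟩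
  have key : ν B ≤ μ B + δ := by
    rw [← measure_add_measure_compl hB, ← measure_add_measure_compl hB] at h
    have h2 : ν B + ν Bᶜ ≤ (μ B + δ) + ν Bᶜ := by
      refine h.trans ?_
      rw [add_right_comm]
      gcongr
    exact (ENNReal.add_le_add_iff_right (measure_ne_top ν _)).mp h2
  exact key.trans (add_le_add (measure_mono hsub) hε.le)

lemma levyProkhorovEDist_map_isometry_le {Z W : Type} [MetricSpace Z] [MeasurableSpace Z]
    [BorelSpace Z] [MetricSpace W] [MeasurableSpace W] [BorelSpace W] {j : Z → W}
    (hj : Isometry j) (μ ν : Measure Z) :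
    levyProkhorovEDist (μ.map j) (ν.map j) ≤ levyProkhorovEDist μ ν := by
  have hjm : Measurable j := hj.continuous.measurable
  have hthick : ∀ (ε : ℝ) (B : Set W), thickening ε (j ⁻¹' B) ⊆ j ⁻¹' thickening ε B := by
    intro ε B x hx
    rw [mem_thickening_iff] at hx
    obtain ⟨z, hz, hxz⟩ := hx
    exact mem_thickening_iff.mpr ⟨j z, hz, by rwa [hj.dist_eq]⟩
  refine levyProkhorovEDist_le_of_forall _ _ _ fun ε B hε _ hB => ?_
  rw [Measure.map_apply hjm hB, Measure.map_apply hjm hB,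
    Measure.map_apply hjm isOpen_thickening.measurableSet,
    Measure.map_apply hjm isOpen_thickening.measurableSet]
  exact ⟨(left_measure_le_of_levyProkhorovEDist_lt hε (hjm hB)).trans
      (add_le_add (measure_mono (hthick _ _)) le_rfl),
    (right_measure_le_of_levyProkhorovEDist_lt hε (hjm hB)).trans
      (add_le_add (measure_mono (hthick _ _)) le_rfl)⟩

/-! ### Variation of the cost of a fixed embedding -/

/-- The cost, for the balls of radius `max r 0`, of a pair of maps `A`, `B` defined on the whole
of `X` and `Y`. -/
noncomputable def ballCost (X Y : RWSpace) {Z : Type} [MetricSpace Z] [MeasurableSpace Z]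
    (A : X.carrier → Z) (B : Y.carrier → Z) (r : ℝ) : ℝ :=
  hausdorffDist (A '' closedBall X.root (max r 0)) (B '' closedBall Y.root (max r 0))
    + dist (A X.root) (B Y.root)
    + levyProkhorovDist (Measure.map A (X.vol.restrict (closedBall X.root (max r 0))))
        (Measure.map B (Y.vol.restrict (closedBall Y.root (max r 0))))

/-- The radius plus the volume of the ball of radius `max r 0`: its increments bound how much one
of the two spaces contributes to the variation of the cost. -/
noncomputable def ballGauge (X : RWSpace) (r : ℝ) : ℝ :=
  max r 0 + (X.vol (closedBall X.root (max r 0))).toReal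

lemma ballGauge_mono {X : RWSpace} (hX : IsLLC X) : Monotone (ballGauge X) := fun r s hrs => by
  have h := max_le_max_right 0 hrs
  exact add_le_add h (ENNReal.toReal_mono (hX.vol_closedBall_ne_top _)
    (measure_mono (closedBall_subset_closedBall h)))

/-- The closed balls of radius `s > r` decrease to the closed ball of radius `r` as `s ↓ r`, so
right-continuity is continuity from above of a locally finite measure. -/
lemma ballGauge_rightCont {X : RWSpace} (hX : IsLLC X) (r : ℝ) :
    ContinuousWithinAt (ballGauge X) (Set.Ici r) r := by
  have hmax : ContinuousWithinAt (fun s : ℝ => max s 0) (Set.Ici r) r := by fun_prop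
  refine hmax.add ?_
  have hm : ContinuousWithinAt (fun s => (X.vol (closedBall X.root s)).toReal)
      (Set.Ici (max r 0)) (max r 0) := by
    refine (ENNReal.continuousAt_toReal (hX.vol_closedBall_ne_top _)).comp_continuousWithinAt
      (f := fun s => X.vol (closedBall X.root s)) ?_
    rw [← continuousWithinAt_Ioi_iff_Ici]
    have hI : closedBall X.root (max r 0) = ⋂ s > max r 0, closedBall X.root s := by
      ext x
      simp only [mem_closedBall, mem_iInter]
      exact ⟨fun h s hs => h.trans hs.le, fun h => le_of_forall_gt_imp_ge_of_dense h⟩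
    unfold ContinuousWithinAt
    beta_reduce
    rw [hI]
    exact tendsto_measure_biInter_gt (fun s _ => isClosed_closedBall.measurableSet.nullMeasurableSet)
      (fun i j _ hij => closedBall_subset_closedBall hij)
      ⟨max r 0 + 1, by simp, hX.vol_closedBall_ne_top _⟩
  exact ContinuousWithinAt.comp (f := fun s : ℝ => max s 0) (t := Set.Ici (max r 0)) hm hmax
    (fun _ hs => Set.mem_Ici.mpr (max_le_max_right 0 (Set.mem_Ici.mp hs)))

/-- Hausdorff distance and Prohorov distance between the images of two concentric balls are
controlled by the increments of the radius and of the volume respectively. -/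
lemma hausdorffDist_add_levyProkhorovDist_le {X : RWSpace} (hX : IsLLC X) {Z : Type}
    [MetricSpace Z] [MeasurableSpace Z] [BorelSpace Z] {A : X.carrier → Z} (hA : Isometry A)
    (r s : ℝ) :
    hausdorffDist (A '' closedBall X.root (max r 0)) (A '' closedBall X.root (max s 0))
      + levyProkhorovDist (Measure.map A (X.vol.restrict (closedBall X.root (max r 0))))
        (Measure.map A (X.vol.restrict (closedBall X.root (max s 0))))
      ≤ |ballGauge X s - ballGauge X r| := by
  wlog hrs : r ≤ s generalizing r s
  · rw [hausdorffDist_comm, levyProkhorovDist_comm, abs_sub_comm]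
    exact this s r (not_le.mp hrs).le
  have h := max_le_max_right 0 hrs
  rw [abs_of_nonneg (sub_nonneg.mpr (ballGauge_mono hX hrs))]
  have hAm : Measurable A := hA.continuous.measurable
  have hfr := hX.isFiniteMeasure_restrict (max r 0)
  have hfs := hX.isFiniteMeasure_restrict (max s 0)
  have h1 := hausdorffDist_image_closedBall_le hX.2.2.1 hA X.root (le_max_right r 0) h
  have hmono : X.vol (closedBall X.root (max r 0)) ≤ X.vol (closedBall X.root (max s 0)) :=
    measure_mono (closedBall_subset_closedBall h)
  have h2 : levyProkhorovDist (Measure.map A (X.vol.restrict (closedBall X.root (max r 0))))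
        (Measure.map A (X.vol.restrict (closedBall X.root (max s 0)))) ≤
      (X.vol (closedBall X.root (max s 0)) - X.vol (closedBall X.root (max r 0))).toReal := by
    refine ENNReal.toReal_mono (ENNReal.sub_ne_top (hX.vol_closedBall_ne_top _)) ?_
    refine levyProkhorovEDist_le_of_le (Measure.map_mono
      (Measure.restrict_mono_set _ (closedBall_subset_closedBall h)) hAm) ?_
    rw [Measure.map_apply hAm .univ, Measure.map_apply hAm .univ]
    simp [add_tsub_cancel_of_le hmono]
  rw [ENNReal.toReal_sub_of_le hmono (hX.vol_closedBall_ne_top _)] at h2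
  unfold ballGauge
  linarith

lemma hausdorffEDist_image_closedBall_ne_top {E F Z : Type} [MetricSpace E] [MetricSpace F]
    [MetricSpace Z] {A : E → Z} {B : F → Z} (hA : Isometry A) (hB : Isometry B) (o : E) (o' : F)
    {r s : ℝ} (hr : 0 ≤ r) (hs : 0 ≤ s) :
    hausdorffEDist (A '' closedBall o r) (B '' closedBall o' s) ≠ ⊤ :=
  hausdorffEDist_ne_top_of_nonempty_of_bounded
    ((nonempty_closedBall.mpr hr).image _) ((nonempty_closedBall.mpr hs).image _)
    (hA.lipschitz.isBounded_image isBounded_closedBall)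
    (hB.lipschitz.isBounded_image isBounded_closedBall)

/-- The change of the cost from radius `r` to radius `s` for a fixed pair of embeddings of the
whole spaces, by the triangle inequality in the ambient space. -/
lemma ballCost_le {X Y : RWSpace} (hX : IsLLC X) (hY : IsLLC Y) {Z : Type}
    [MetricSpace Z] [MeasurableSpace Z] [BorelSpace Z] {A : X.carrier → Z} {B : Y.carrier → Z}
    (hA : Isometry A) (hB : Isometry B) (r s : ℝ) :
    ballCost X Y A B s ≤ ballCost X Y A B r + |ballGauge X s - ballGauge X r|
      + |ballGauge Y s - ballGauge Y r| := by
  have hXr := hX.isFiniteMeasure_restrict (max r 0)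
  have hXs := hX.isFiniteMeasure_restrict (max s 0)
  have hYr := hY.isFiniteMeasure_restrict (max r 0)
  have hYs := hY.isFiniteMeasure_restrict (max s 0)
  have h0r := le_max_right r 0
  have h0s := le_max_right s 0
  have e1 := hausdorffDist_add_levyProkhorovDist_le hX hA s r
  have e2 := hausdorffDist_add_levyProkhorovDist_le hY hB r s
  rw [abs_sub_comm] at e1
  have H1 := hausdorffDist_triangle (u := B '' closedBall Y.root (max s 0))
    (hausdorffEDist_image_closedBall_ne_top hA hA X.root X.root h0s h0r)
  have H2 := hausdorffDist_triangle (u := B '' closedBall Y.root (max s 0))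
    (hausdorffEDist_image_closedBall_ne_top hA hB X.root Y.root h0r h0r)
  have L1 := levyProkhorovDist_triangle
    (Measure.map A (X.vol.restrict (closedBall X.root (max s 0))))
    (Measure.map A (X.vol.restrict (closedBall X.root (max r 0))))
    (Measure.map B (Y.vol.restrict (closedBall Y.root (max s 0))))
  have L2 := levyProkhorovDist_triangle
    (Measure.map A (X.vol.restrict (closedBall X.root (max r 0))))
    (Measure.map B (Y.vol.restrict (closedBall Y.root (max r 0))))
    (Measure.map B (Y.vol.restrict (closedBall Y.root (max s 0))))
  unfold ballCost
  linarith

/-- `ballCost` is the cost, in the sense of `ghpSet`, of the restrictions of `A` and `B` to the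
balls: the push-forward of the comap measure on the ball is that of the restricted measure. -/
lemma ballCost_eq {X Y : RWSpace} {Z : Type} [MetricSpace Z] [MeasurableSpace Z] [BorelSpace Z]
    {A : X.carrier → Z} {B : Y.carrier → Z} (hA : Isometry A) (hB : Isometry B) (r : ℝ) :
    ballCost X Y A B r =
      hausdorffDist (Set.range fun x : (X.restrict r).carrier => A x.1)
          (Set.range fun y : (Y.restrict r).carrier => B y.1)
        + dist (A (X.restrict r).root.1) (B (Y.restrict r).root.1)
        + levyProkhorovDist
            (Measure.map (fun x : (X.restrict r).carrier => A x.1) (X.restrict r).vol)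
            (Measure.map (fun y : (Y.restrict r).carrier => B y.1) (Y.restrict r).vol) := by
  have key : ∀ (W : RWSpace) (C : W.carrier → Z), Isometry C →
      (Set.range (fun x : (W.restrict r).carrier => C x.1) = C '' closedBall W.root (max r 0)) ∧
      Measure.map (fun x : (W.restrict r).carrier => C x.1) (W.restrict r).vol
        = Measure.map C (W.vol.restrict (closedBall W.root (max r 0))) := by
    intro W C hC
    constructor
    · exact (Set.image_eq_range C (closedBall W.root (max r 0))).symm
    · rw [← map_comap_subtype_coe isClosed_closedBall.measurableSet,
        Measure.map_map hC.continuous.measurable measurable_subtype_coe]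
      rfl
  rw [(key X A hA).1, (key X A hA).2, (key Y B hB).1, (key Y B hB).2]
  rfl

/-! ### Extending embeddings of balls by gluing -/

lemma ghpSet_nonneg {X Y : RWSpace} {c : ℝ} (hc : c ∈ ghpSet X Y) : 0 ≤ c := by
  obtain ⟨Z, _, _, _, Φ, Φ', -, -, -, -, rfl⟩ := hc
  exact add_nonneg (add_nonneg hausdorffDist_nonneg dist_nonneg) ENNReal.toReal_nonneg

lemma dcGHP_nonneg (X Y : RWSpace) : 0 ≤ dcGHP X Y := Real.sInf_nonneg fun _ => ghpSet_nonneg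

lemma ballCost_mem_ghpSet {X Y : RWSpace} {Z : Type} [MetricSpace Z] [MeasurableSpace Z]
    [BorelSpace Z] [CompleteSpace Z] [TopologicalSpace.SeparableSpace Z]
    {A : X.carrier → Z} {B : Y.carrier → Z} (hA : Isometry A) (hB : Isometry B) (r : ℝ) :
    ballCost X Y A B r ∈ ghpSet (X.restrict r) (Y.restrict r) :=
  ⟨Z, ‹_›, ‹_›, ‹_›, fun x => A x.1, fun y => B y.1, fun x y => hA x.1 y.1,
    fun x y => hB x.1 y.1, ‹_›, ‹_›, ballCost_eq hA hB r⟩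

/-- The two factors embed isometrically in the product along the slices through the roots. -/
lemma ghpSet_restrict_nonempty {X Y : RWSpace} (hX : IsLLC X) (hY : IsLLC Y) (r : ℝ) :
    (ghpSet (X.restrict r) (Y.restrict r)).Nonempty := by
  have := hX.properSpace
  have := hY.properSpace
  let : MeasurableSpace (X.carrier × Y.carrier) := borel _
  have : BorelSpace (X.carrier × Y.carrier) := ⟨rfl⟩
  have hA : Isometry fun x : X.carrier => (x, Y.root) :=
    Isometry.of_dist_eq fun x y => by simp [Prod.dist_eq]
  have hB : Isometry fun y : Y.carrier => (X.root, y) :=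
    Isometry.of_dist_eq fun x y => by simp [Prod.dist_eq]
  exact ⟨_, ballCost_mem_ghpSet hA hB r⟩

/-- A Polish space containing an isometric copy of a piece `T` of a Polish space `E` can be
enlarged, by gluing along `T`, to a Polish space containing the whole of `E`. -/
lemma exists_polish_glue {T E Z : Type} [MetricSpace T] [Nonempty T] [MetricSpace E]
    [MetricSpace Z] [CompleteSpace E] [CompleteSpace Z] [TopologicalSpace.SeparableSpace E]
    [TopologicalSpace.SeparableSpace Z] {Φ : T → Z} {ι : T → E} (hΦ : Isometry Φ)
    (hι : Isometry ι) :
    ∃ (W : Type) (_ : MetricSpace W) (j : Z → W) (A : E → W), Isometry j ∧ Isometry A ∧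
      CompleteSpace W ∧ TopologicalSpace.SeparableSpace W ∧ ∀ t, A (ι t) = j (Φ t) := by
  have hcov : Set.range (toGlueL hΦ hι) ∪ Set.range (toGlueR hΦ hι) = Set.univ := by
    refine Set.eq_univ_of_forall fun w => ?_
    induction w using Quotient.inductionOn' with
    | h w =>
      rcases w with z | e
      · exact Or.inl ⟨z, rfl⟩
      · exact Or.inr ⟨e, rfl⟩
  refine ⟨GlueSpace hΦ hι, inferInstance, toGlueL hΦ hι, toGlueR hΦ hι, toGlueL_isometry hΦ hι,
    toGlueR_isometry hΦ hι, ?_, ?_, fun t => (congrFun (toGlue_commute hΦ hι) t).symm⟩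
  · rw [completeSpace_iff_isComplete_univ, ← hcov]
    exact IsComplete.union
      (toGlueL_isometry hΦ hι).isUniformInducing.isComplete_range
      (toGlueR_isometry hΦ hι).isUniformInducing.isComplete_range
  · rw [← TopologicalSpace.isSeparable_univ_iff, ← hcov]
    exact (TopologicalSpace.isSeparable_range (toGlueL_isometry hΦ hι).continuous).union
      (TopologicalSpace.isSeparable_range (toGlueR_isometry hΦ hι).continuous)

/-- Every embedding of the balls of radius `r` extends, without increase of the cost, to an
embedding of the whole spaces: glue first `X`, then `Y`, to the ambient Polish space. -/
lemma exists_ballCost_le {X Y : RWSpace} (hX : IsLLC X) (hY : IsLLC Y) {r c : ℝ}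
    (hc : c ∈ ghpSet (X.restrict r) (Y.restrict r)) :
    ∃ (Z : Type) (_ : MetricSpace Z) (_ : MeasurableSpace Z) (_ : BorelSpace Z)
      (A : X.carrier → Z) (B : Y.carrier → Z), Isometry A ∧ Isometry B ∧ CompleteSpace Z ∧
        TopologicalSpace.SeparableSpace Z ∧ ballCost X Y A B r ≤ c := by
  obtain ⟨Z, _, _, _, Φ, Φ', hΦ, hΦ', _, _, rfl⟩ := hc
  have := hX.properSpace
  have := hY.properSpace
  have : Nonempty (X.restrict r).carrier := ⟨(X.restrict r).root⟩
  have : Nonempty (Y.restrict r).carrier := ⟨(Y.restrict r).root⟩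
  have hιX : Isometry (fun x : (X.restrict r).carrier => (x.1 : X.carrier)) :=
    isometry_subtype_coe
  have hιY : Isometry (fun y : (Y.restrict r).carrier => (y.1 : Y.carrier)) :=
    isometry_subtype_coe
  obtain ⟨W₁, _, j₁, A₁, hj₁, hA₁, _, _, hcomm₁⟩ := exists_polish_glue hΦ hιX
  obtain ⟨W, _, j₂, B, hj₂, hB, hW, hW', hcomm₂⟩ := exists_polish_glue (hj₁.comp hΦ') hιY
  let : MeasurableSpace W := borel _
  have : BorelSpace W := ⟨rfl⟩
  have hA : Isometry (j₂ ∘ A₁) := hj₂.comp hA₁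
  have hj : Isometry (j₂ ∘ j₁) := hj₂.comp hj₁
  have hAj : ∀ x : (X.restrict r).carrier, (j₂ ∘ A₁) x.1 = (j₂ ∘ j₁) (Φ x) := fun x => by
    simp only [Function.comp_apply]
    rw [← hcomm₁ x]
  have hBj : ∀ y : (Y.restrict r).carrier, B y.1 = (j₂ ∘ j₁) (Φ' y) := hcomm₂
  refine ⟨W, inferInstance, inferInstance, inferInstance, j₂ ∘ A₁, B, hA, hB, hW, hW', ?_⟩
  have := hX.isFiniteMeasure_restrict (max r 0)
  have hfin : ∀ V : RWSpace, IsLLC V → IsFiniteMeasure (V.restrict r).vol := fun V hV => by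
    refine ⟨?_⟩
    have : (V.restrict r).vol Set.univ = V.vol (closedBall V.root (max r 0)) := by
      exact (comap_subtype_coe_apply isClosed_closedBall.measurableSet V.vol _).trans
        (congrArg V.vol (Set.image_univ.trans Subtype.range_coe))
    rw [this]
    exact (hV.vol_closedBall_ne_top _).lt_top
  have := hfin X hX
  have := hfin Y hY
  rw [ballCost_eq hA hB]
  simp only [hAj, hBj]
  have hm : ∀ (V : RWSpace) (Ψ : V.carrier → Z), Isometry Ψ →
      Measure.map (fun v => (j₂ ∘ j₁) (Ψ v)) V.vol = Measure.map (j₂ ∘ j₁) (Measure.map Ψ V.vol) :=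
    fun V Ψ hΨ => (Measure.map_map hj.continuous.measurable hΨ.continuous.measurable).symm
  rw [hm _ Φ hΦ, hm _ Φ' hΦ', hj.dist_eq]
  have hr1 : ∀ (V : Type) (Ψ : V → Z),
      Set.range (fun v => (j₂ ∘ j₁) (Ψ v)) = (j₂ ∘ j₁) '' Set.range Ψ := fun V Ψ =>
    Set.range_comp (j₂ ∘ j₁) Ψ
  rw [hr1, hr1, hausdorffDist_image hj]
  gcongr
  exact ENNReal.toReal_mono (levyProkhorovEDist_ne_top _ _)
    (levyProkhorovEDist_map_isometry_le hj _ _)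

/-! ### Regularity of the distance between balls -/

/-- The sum of the gauges of the two spaces, a monotone right-continuous function controlling the
variation of `r ↦ dcGHP (X.restrict r) (Y.restrict r)`. -/
noncomputable def gaugeSum (X Y : RWSpace) (r : ℝ) : ℝ := ballGauge X r + ballGauge Y r

lemma gaugeSum_mono {X Y : RWSpace} (hX : IsLLC X) (hY : IsLLC Y) : Monotone (gaugeSum X Y) :=
  (ballGauge_mono hX).add (ballGauge_mono hY)

/-- An almost optimal embedding at radius `r`, extended to the whole spaces, is a competitor at
radius `s`, whether `s` is smaller or larger than `r`. -/
lemma dcGHP_restrict_le {X Y : RWSpace} (hX : IsLLC X) (hY : IsLLC Y) (r s : ℝ) :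
    dcGHP (X.restrict s) (Y.restrict s) ≤
      dcGHP (X.restrict r) (Y.restrict r) + |gaugeSum X Y s - gaugeSum X Y r| := by
  have habs : |ballGauge X s - ballGauge X r| + |ballGauge Y s - ballGauge Y r|
      = |gaugeSum X Y s - gaugeSum X Y r| := by
    -- both increments have the sign of `s - r`
    rcases le_total r s with h | h
    · have h1 := ballGauge_mono hX h
      have h2 := ballGauge_mono hY h
      rw [abs_of_nonneg (by linarith), abs_of_nonneg (by linarith), gaugeSum, gaugeSum,
        abs_of_nonneg (by linarith)]
      ring
    · have h1 := ballGauge_mono hX h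
      have h2 := ballGauge_mono hY h
      rw [abs_of_nonpos (by linarith), abs_of_nonpos (by linarith), gaugeSum, gaugeSum,
        abs_of_nonpos (by linarith)]
      ring
  rw [← sub_le_iff_le_add]
  refine le_csInf (ghpSet_restrict_nonempty hX hY r) fun c hc => ?_
  obtain ⟨Z, _, _, _, A, B, hA, hB, _, _, hle⟩ := exists_ballCost_le hX hY hc
  have h1 : dcGHP (X.restrict s) (Y.restrict s) ≤ ballCost X Y A B s :=
    csInf_le ⟨0, fun _ => ghpSet_nonneg⟩ (ballCost_mem_ghpSet hA hB s)
  have h2 := ballCost_le hX hY hA hB r s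
  linarith

/-- A function whose increments are bounded by those of `G` is a continuous function of `G`. -/
lemma exists_continuous_comp {f G : ℝ → ℝ} (h : ∀ r s, f s ≤ f r + |G s - G r|) :
    ∃ φ : ℝ → ℝ, Continuous φ ∧ ∀ r, f r = φ (G r) := by
  have hinv : ∀ r, G (Function.invFun G (G r)) = G r := fun r =>
    Function.invFun_eq ⟨r, rfl⟩
  have hL : LipschitzOnWith 1 (fun x => f (Function.invFun G x)) (Set.range G) := by
    refine LipschitzOnWith.of_le_add_mul 1 ?_
    rintro _ ⟨s, rfl⟩ _ ⟨r, rfl⟩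
    have := h (Function.invFun G (G r)) (Function.invFun G (G s))
    rwa [hinv, hinv, ← Real.dist_eq, ← one_mul (dist _ _)] at this
  obtain ⟨φ, hφ, heq⟩ := hL.extend_real
  refine ⟨φ, hφ.continuous, fun r => ?_⟩
  rw [← heq ⟨r, rfl⟩]
  have h1 := h (Function.invFun G (G r)) r
  have h2 := h r (Function.invFun G (G r))
  simp only [hinv, sub_self, abs_zero, add_zero] at h1 h2
  exact le_antisymm h1 h2

/-- Lemma 2.6 (Abraham–Delmas–Hoscheit): for rooted weighted complete locally compact
length spaces `X` and `Y`, the map `r ↦ d^c_GHP(X^(r), Y^(r))` is càdlàg on `[0,∞)`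
(right-continuous with left limits); consequently the integral defining
`d_GHP(X,Y) = ∫_0^∞ e^{-r}(1 ∧ d^c_GHP(X^(r),Y^(r))) dr` is well defined. -/
theorem dcGHP_restrict_cadlag (X Y : RWSpace) (hX : IsLLC X) (hY : IsLLC Y) :
    (∀ r : ℝ, 0 ≤ r →
      ContinuousWithinAt (fun s => dcGHP (X.restrict s) (Y.restrict s)) (Set.Ici r) r) ∧
    (∀ r : ℝ, 0 < r → ∃ L : ℝ,
      Filter.Tendsto (fun s => dcGHP (X.restrict s) (Y.restrict s))
        (nhdsWithin r (Set.Ico 0 r)) (nhds L)) ∧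
    MeasureTheory.IntegrableOn
      (fun r => Real.exp (-r) * min (dcGHP (X.restrict r) (Y.restrict r)) 1)
      (Set.Ioi 0) := by
  have hG := gaugeSum_mono hX hY
  obtain ⟨φ, hφ, hf⟩ := exists_continuous_comp
    (f := fun s => dcGHP (X.restrict s) (Y.restrict s)) (dcGHP_restrict_le hX hY)
  simp only [hf]
  refine ⟨fun r _ => ?_, fun r _ => ?_, ?_⟩
  · exact hφ.continuousAt.comp_continuousWithinAt
      ((ballGauge_rightCont hX r).add (ballGauge_rightCont hY r))
  · exact ⟨_, (hφ.tendsto _).comp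
      ((hG.tendsto_nhdsLT r).mono_left (nhdsWithin_mono r fun s hs => hs.2))⟩
  · have hexp : IntegrableOn (fun r : ℝ => Real.exp (-r)) (Set.Ioi 0) := by
      simpa using integrableOn_exp_neg_Ioi 0
    have hmeas : Measurable fun r => Real.exp (-r) * min (φ (gaugeSum X Y r)) 1 :=
      (by fun_prop : Measurable fun r : ℝ => Real.exp (-r)).mul
        ((hφ.measurable.comp hG.measurable).min measurable_const)
    refine hexp.mono' hmeas.aestronglyMeasurable (Filter.Eventually.of_forall fun r => ?_)
    have h0 : 0 ≤ min (φ (gaugeSum X Y r)) 1 := by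
      rw [← hf]
      exact le_min (dcGHP_nonneg _ _) zero_le_one
    rw [Real.norm_of_nonneg (mul_nonneg (Real.exp_pos _).le h0)]
    exact mul_le_of_le_one_right (Real.exp_pos _).le (min_le_right _ _)
end

section
/- Let f, g: [0,∞) → [0,∞) be two continuous functions with compact support and f(0)=g(0)=0. Then the Gromov–Hausdorff–Prohorov distance between the coded rooted weighted trees satisfies d^c_GHP(T^f, T^g) ≤ 6‖f−g‖_∞ + |σ^f − σ^g|, where ‖·‖_∞ is the uniform norm. -/
/-!
The two exploration parametrisations `t ↦ P t ∈ T^f` and `t ↦ Q t ∈ T^g`, extended to all of `ℝ`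
(both trees stay at the root outside their lifetime), form a correspondence between the trees.
Its distortion is at most `4 M` with `M = ‖f - g‖_∞`, because an infimum over a segment moves by at
most `M` when `f` is replaced by `g` (`abs_treeDist_sub_le`).

For every `δ > 0` with `δ ≥ 2 M`, gluing the trees along this correspondence gives a compact
metric on their disjoint union in which `P t` and `Q t` are at distance exactly `δ`
(`exists_gluing`). There the Hausdorff distance and the distance of the roots are at most `δ`. The
mass measures are the images of Lebesgue measure on `[0, σ^f]` and `[0, σ^g]`, so their Prohorov
distance is at most `δ + |σ^f - σ^g|` (`levyProkhorovDist_map_restrict_le`): move mass by `δ` on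
the common interval and discard the rest. The sum is `3 δ + |σ^f - σ^g|`, and `δ ↓ 2 M` yields the
bound; keeping `δ > 2 M` makes the glued distance a genuine metric even when `f = g`.
-/

open Metric Set

open MeasureTheory

/-- The lifetime `σ^f = sup{t : f(t) > 0}` of an excursion `f` (with `sup ∅ = 0`). -/
noncomputable def sigmaF (f : ℝ → ℝ) : ℝ := sSup {t : ℝ | 0 < f t}

/-- The tree semi-metric coded by `f`:
`d^f(s,t) = f(s) + f(t) - 2 inf_{u ∈ [s∧t, s∨t]} f(u)`. -/
noncomputable def treeDist (f : ℝ → ℝ) (s t : ℝ) : ℝ :=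
  f s + f t - 2 * sInf (f '' Set.Icc (min s t) (max s t))

/-- `T` is (a representative of) the rooted weighted tree `T^f` coded by `f`: there is a
projection `p : [0,σ^f] → T`, onto, realizing the semi-metric `d^f`, sending `0` to the
root, and pushing Lebesgue measure on `[0,σ^f]` to the mass measure of `T`. -/
def Codes (f : ℝ → ℝ) (T : RWSpace) : Prop :=
  ∃ p : Set.Icc (0:ℝ) (sigmaF f) → T.carrier,
    Function.Surjective p ∧
    (∀ s t : Set.Icc (0:ℝ) (sigmaF f), dist (p s) (p t) = treeDist f s.1 t.1) ∧
    (∀ s : Set.Icc (0:ℝ) (sigmaF f), (s : ℝ) = 0 → p s = T.root) ∧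
    T.vol = MeasureTheory.Measure.map p
      (MeasureTheory.Measure.comap Subtype.val (volume : MeasureTheory.Measure ℝ))

open Filter Topology

/-! ### The coded semi-metric -/

lemma treeDist_comm (f : ℝ → ℝ) (s t : ℝ) : treeDist f s t = treeDist f t s := by
  simp only [treeDist, min_comm s t, max_comm s t, add_comm (f s) (f t)]

lemma treeDist_of_eq_zero {f : ℝ → ℝ} (hfnn : ∀ t, 0 ≤ f t) {t : ℝ} (ht : f t = 0) (s : ℝ) :
    treeDist f s t = f s := by
  have h : sInf (f '' Icc (min s t) (max s t)) = 0 := by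
    refine IsLeast.csInf_eq ⟨⟨t, ⟨min_le_right _ _, le_max_right _ _⟩, ht⟩, ?_⟩
    rintro _ ⟨u, -, rfl⟩
    exact hfnn u
  simp [treeDist, h, ht]

lemma sInf_image_le_add {f g : ℝ → ℝ} (hfnn : ∀ t, 0 ≤ f t) {M : ℝ}
    (hM : ∀ t, |f t - g t| ≤ M) {S : Set ℝ} (hS : S.Nonempty) :
    sInf (f '' S) ≤ sInf (g '' S) + M := by
  rw [← sub_le_iff_le_add]
  refine le_csInf (hS.image g) ?_
  rintro _ ⟨u, hu, rfl⟩
  have h1 : sInf (f '' S) ≤ f u :=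
    csInf_le ⟨0, by rintro _ ⟨v, -, rfl⟩; exact hfnn v⟩ ⟨u, hu, rfl⟩
  have := abs_le.1 (hM u)
  linarith

lemma abs_treeDist_sub_le {f g : ℝ → ℝ} (hfnn : ∀ t, 0 ≤ f t) (hgnn : ∀ t, 0 ≤ g t) {M : ℝ}
    (hM : ∀ t, |f t - g t| ≤ M) (s t : ℝ) :
    |treeDist f s t - treeDist g s t| ≤ 4 * M := by
  have hne : (Icc (min s t) (max s t)).Nonempty := nonempty_Icc.2 min_le_max
  have h1 := sInf_image_le_add hfnn hM hne
  have h2 := sInf_image_le_add hgnn (fun t => (abs_sub_comm (g t) (f t)).trans_le (hM t)) hne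
  have h3 := abs_le.1 (hM s)
  have h4 := abs_le.1 (hM t)
  rw [treeDist, treeDist, abs_le]
  constructor <;> linarith

/-- Near `s`, both the endpoint value `f t` and the infimum of `f` between `s` and `t` are close
to `f s`. -/
lemma eventually_treeDist_lt {f : ℝ → ℝ} (hf : Continuous f) (s : ℝ) {ε : ℝ} (hε : 0 < ε) :
    ∀ᶠ t in 𝓝 s, treeDist f t s < ε := by
  obtain ⟨δ, hδ, H⟩ := Metric.continuous_iff.1 hf s (ε / 4) (by positivity)
  filter_upwards [Metric.ball_mem_nhds s hδ] with t ht
  rw [Metric.mem_ball, Real.dist_eq, abs_lt] at ht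
  have H' : ∀ u ∈ Icc (min t s) (max t s), |f u - f s| < ε / 4 := by
    intro u hu
    apply H
    rw [Real.dist_eq, abs_lt]
    rcases le_total t s with h | h
    · rw [min_eq_left h, max_eq_right h] at hu
      constructor <;> linarith [hu.1, hu.2]
    · rw [min_eq_right h, max_eq_left h] at hu
      constructor <;> linarith [hu.1, hu.2]
  have h1 : f s - ε / 4 ≤ sInf (f '' Icc (min t s) (max t s)) := by
    refine le_csInf ((nonempty_Icc.2 min_le_max).image f) ?_
    rintro _ ⟨u, hu, rfl⟩
    linarith [(abs_lt.1 (H' u hu)).1]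
  have h2 := (abs_lt.1 (H' t ⟨min_le_left _ _, le_max_left _ _⟩)).2
  rw [treeDist]
  linarith

/-! ### Parametrising a coded tree by the real line -/

lemma sigmaF_nonneg {f : ℝ → ℝ} (hf0 : ∀ t ≤ 0, f t = 0) : 0 ≤ sigmaF f := by
  refine Real.sSup_nonneg fun t (ht : 0 < f t) => ?_
  by_contra! h
  exact ht.ne' (hf0 t h.le)

lemma eq_zero_of_sigmaF_le {f : ℝ → ℝ} (hf : Continuous f) (hfnn : ∀ t, 0 ≤ f t)
    (hfs : HasCompactSupport f) {t : ℝ} (ht : sigmaF f ≤ t) : f t = 0 := by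
  have hb : BddAbove {t : ℝ | 0 < f t} :=
    hfs.isCompact.bddAbove.mono fun t (h : 0 < f t) => subset_tsupport f h.ne'
  by_contra h
  have hpos : 0 < f t := lt_of_le_of_ne (hfnn t) (Ne.symm h)
  -- by continuity, positivity at `t` would persist slightly to the right of `t`
  have hev : ∀ᶠ u in 𝓝[>] t, 0 < f u :=
    (hf.continuousAt.eventually (lt_mem_nhds hpos)).filter_mono nhdsWithin_le_nhds
  obtain ⟨u, hu, hu'⟩ := (hev.and self_mem_nhdsWithin).exists
  exact absurd (le_csSup hb hu) (not_le.2 (ht.trans_lt hu'))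

/-- Clamping the parameter to `[0, σ^f]` extends the projection of a coded tree to `ℝ` without
changing the formula for the distance, since `f` vanishes outside `(0, σ^f)`. -/
lemma Codes.exists_param {f : ℝ → ℝ} {T : RWSpace} (hT : Codes f T)
    (hf : Continuous f) (hf0 : ∀ t ≤ 0, f t = 0) (hfnn : ∀ t, 0 ≤ f t)
    (hfs : HasCompactSupport f) :
    ∃ P : ℝ → T.carrier, Continuous P ∧ Function.Surjective P ∧ CompactSpace T.carrier ∧
      (∀ s t, dist (P s) (P t) = treeDist f s t) ∧ P 0 = T.root ∧
      T.vol = Measure.map P (volume.restrict (Icc 0 (sigmaF f))) := by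
  obtain ⟨p, hsurj, hdist, hroot, hvol⟩ := hT
  have hσ := sigmaF_nonneg hf0
  have hproj : ∀ t, t ∉ Icc 0 (sigmaF f) → f t = 0 ∧ f (projIcc 0 (sigmaF f) hσ t) = 0 := by
    intro t ht
    rcases le_total t 0 with h | h
    · exact ⟨hf0 t h, by rw [projIcc_of_le_left hσ h]; exact hf0 0 le_rfl⟩
    · have h' : sigmaF f ≤ t := by
        by_contra! h'
        exact ht ⟨h, h'.le⟩
      exact ⟨eq_zero_of_sigmaF_le hf hfnn hfs h', by
        rw [projIcc_of_right_le hσ h']; exact eq_zero_of_sigmaF_le hf hfnn hfs le_rfl⟩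
  have hval : ∀ t, f (projIcc 0 (sigmaF f) hσ t) = f t := by
    intro t
    by_cases ht : t ∈ Icc 0 (sigmaF f)
    · rw [projIcc_of_mem hσ ht]
    · rw [(hproj t ht).1, (hproj t ht).2]
  have hd : ∀ s t, dist (p (projIcc 0 (sigmaF f) hσ s)) (p (projIcc 0 (sigmaF f) hσ t))
      = treeDist f s t := by
    intro s t
    rw [hdist]
    by_cases ht : t ∈ Icc 0 (sigmaF f)
    · by_cases hs : s ∈ Icc 0 (sigmaF f)
      · rw [projIcc_of_mem hσ ht, projIcc_of_mem hσ hs]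
      · rw [treeDist_comm, treeDist_of_eq_zero hfnn (hproj s hs).2, treeDist_comm f s,
          treeDist_of_eq_zero hfnn (hproj s hs).1, hval]
    · rw [treeDist_of_eq_zero hfnn (hproj t ht).2, treeDist_of_eq_zero hfnn (hproj t ht).1, hval]
  have hcont : Continuous fun t => p (projIcc 0 (sigmaF f) hσ t) := by
    rw [continuous_iff_continuousAt]
    intro s
    rw [ContinuousAt, Metric.tendsto_nhds]
    intro ε hε
    filter_upwards [eventually_treeDist_lt hf s hε] with t ht
    rwa [hd]
  have hpP : ∀ x : Icc 0 (sigmaF f), p (projIcc 0 (sigmaF f) hσ x) = p x := fun x => by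
    rw [projIcc_val]
  have hpc : Continuous p := by
    have : p = (fun t : ℝ => p (projIcc 0 (sigmaF f) hσ t)) ∘ Subtype.val :=
      funext fun x => (hpP x).symm
    rw [this]
    exact hcont.comp continuous_subtype_val
  refine ⟨fun t => p (projIcc 0 (sigmaF f) hσ t), hcont, ?_, hsurj.compactSpace hpc, hd,
    hroot _ ?_, ?_⟩
  · exact hsurj.comp (projIcc_surjective hσ)
  · rw [projIcc_of_le_left hσ le_rfl]
  · rw [hvol, ← map_comap_subtype_coe measurableSet_Icc,
      Measure.map_map hcont.measurable measurable_subtype_coe]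
    congr 1
    exact funext fun x => (hpP x).symm

/-! ### Gluing and the Prohorov estimate -/

lemma exists_gluing {X Y : Type} [MetricSpace X] [MetricSpace Y] [CompactSpace X] [CompactSpace Y]
    (P : ℝ → X) (Q : ℝ → Y) {δ : ℝ} (hδ : 0 < δ)
    (H : ∀ s t, |dist (P s) (P t) - dist (Q s) (Q t)| ≤ 2 * δ) :
    ∃ (Z : Type) (_ : MetricSpace Z) (Φ : X → Z) (Ψ : Y → Z),
      Isometry Φ ∧ Isometry Ψ ∧ CompactSpace Z ∧ ∀ t, dist (Φ (P t)) (Ψ (Q t)) = δ :=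
  ⟨X ⊕ Y, glueMetricApprox P Q δ hδ H, Sum.inl, Sum.inr,
    @Isometry.of_dist_eq _ _ _ (glueMetricApprox P Q δ hδ H).toPseudoMetricSpace _
      fun _ _ => rfl,
    @Isometry.of_dist_eq _ _ _ (glueMetricApprox P Q δ hδ H).toPseudoMetricSpace _
      fun _ _ => rfl,
    inferInstanceAs (CompactSpace (X ⊕ Y)),
    fun t => glueDist_glued_points P Q δ t⟩

/-- One half of the Prohorov estimate: the mass carried by `[0, a] \ [0, b]` is discarded, and on
`[0, a] ∩ [0, b]` the point `F t` is replaced by `G t`, which is less than `ε` away. -/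
lemma map_restrict_le_thickening {Z : Type} [MetricSpace Z] [MeasurableSpace Z] [BorelSpace Z]
    {F G : ℝ → Z} (hF : Measurable F) (hG : Measurable G) {a b ε : ℝ}
    (h : ∀ t, dist (F t) (G t) < ε) {B : Set Z} (hB : MeasurableSet B) :
    Measure.map F (volume.restrict (Icc 0 a)) B
      ≤ Measure.map G (volume.restrict (Icc 0 b)) (thickening ε B) + ENNReal.ofReal |a - b| := by
  rw [Measure.map_apply hF hB, Measure.map_apply hG isOpen_thickening.measurableSet,
    Measure.restrict_apply (hF hB), Measure.restrict_apply (hG isOpen_thickening.measurableSet)]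
  have hsub : F ⁻¹' B ∩ Icc 0 a ⊆ (G ⁻¹' thickening ε B ∩ Icc 0 b) ∪ Ioc b a := by
    rintro t ⟨htB, ht0, hta⟩
    rcases le_or_gt t b with htb | htb
    · refine Or.inl ⟨mem_thickening_iff.2 ⟨F t, htB, ?_⟩, ht0, htb⟩
      rw [dist_comm]
      exact h t
    · exact Or.inr ⟨htb, hta⟩
  refine (measure_mono hsub).trans ((measure_union_le _ _).trans ?_)
  gcongr
  rw [Real.volume_Ioc]
  exact ENNReal.ofReal_le_ofReal (le_abs_self _)

lemma levyProkhorovDist_map_restrict_le {Z : Type} [MetricSpace Z] [MeasurableSpace Z]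
    [BorelSpace Z] {F G : ℝ → Z} (hF : Measurable F) (hG : Measurable G) (a b : ℝ) {δ : ℝ}
    (hδ : 0 ≤ δ) (h : ∀ t, dist (F t) (G t) ≤ δ) :
    levyProkhorovDist (Measure.map F (volume.restrict (Icc 0 a)))
      (Measure.map G (volume.restrict (Icc 0 b))) ≤ δ + |a - b| := by
  refine ENNReal.toReal_le_of_le_ofReal (by positivity) ?_
  -- an `ε > δ + |a - b|` bounds both the displacement (strictly) and the discarded mass
  refine levyProkhorovEDist_le_of_forall _ _ _ fun ε B hε hεtop hB => ?_
  have hε' : δ + |a - b| < ε.toReal :=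
    (ENNReal.ofReal_lt_iff_lt_toReal (by positivity) hεtop.ne).1 hε
  have h1 : ∀ t, dist (F t) (G t) < ε.toReal := fun t => by
    linarith [h t, abs_nonneg (a - b)]
  have h2 : ENNReal.ofReal |a - b| ≤ ε :=
    (ENNReal.ofReal_le_ofReal (by linarith)).trans hε.le
  constructor
  · refine (map_restrict_le_thickening (b := b) hF hG h1 hB).trans ?_
    gcongr
  · refine (map_restrict_le_thickening (b := a) hG hF
      (fun t => (dist_comm _ _).trans_lt (h1 t)) hB).trans ?_
    rw [abs_sub_comm]
    gcongr

/-! ### The bound -/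

/-- Proposition 2.14 (Abraham–Delmas–Hoscheit): for continuous non-negative compactly
supported `f, g` vanishing at `0`, the Gromov–Hausdorff–Prohorov distance between the
coded rooted weighted trees satisfies
`d^c_GHP(T^f, T^g) ≤ 6 ‖f - g‖_∞ + |σ^f - σ^g|`. -/
theorem dcGHP_codedTrees_le (f g : ℝ → ℝ)
    (hf : Continuous f) (hf0 : ∀ t ≤ 0, f t = 0) (hfnn : ∀ t, 0 ≤ f t)
    (hfs : HasCompactSupport f)
    (hg : Continuous g) (hg0 : ∀ t ≤ 0, g t = 0) (hgnn : ∀ t, 0 ≤ g t)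
    (hgs : HasCompactSupport g)
    (Tf Tg : RWSpace) (hTf : Codes f Tf) (hTg : Codes g Tg) :
    dcGHP Tf Tg ≤ 6 * (⨆ t : ℝ, |f t - g t|) + |sigmaF f - sigmaF g| := by
  obtain ⟨P, hPc, hPs, hXc, hPd, hP0, hPv⟩ := hTf.exists_param hf hf0 hfnn hfs
  obtain ⟨Q, hQc, hQs, hYc, hQd, hQ0, hQv⟩ := hTg.exists_param hg hg0 hgnn hgs
  set M : ℝ := ⨆ t : ℝ, |f t - g t| with hMdef
  have hM : ∀ t, |f t - g t| ≤ M := by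
    obtain ⟨A, hA⟩ := hf.bddAbove_range_of_hasCompactSupport hfs
    obtain ⟨B, hB⟩ := hg.bddAbove_range_of_hasCompactSupport hgs
    refine le_ciSup ⟨A + B, ?_⟩
    rintro _ ⟨t, rfl⟩
    have h1 : f t ≤ A := hA ⟨t, rfl⟩
    have h2 : g t ≤ B := hB ⟨t, rfl⟩
    exact abs_le.2 ⟨by linarith [hfnn t, hgnn t], by linarith [hfnn t, hgnn t]⟩
  have hM0 : 0 ≤ M := (abs_nonneg _).trans (hM 0)
  refine le_of_forall_pos_le_add fun ε hε => ?_
  set δ : ℝ := 2 * M + ε / 3 with hδdef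
  have hδ : 0 < δ := by positivity
  obtain ⟨Z, mZ, Φ, Ψ, hΦ, hΨ, hZ, hPQ⟩ := exists_gluing P Q hδ fun s t => by
    rw [hPd, hQd]
    exact (abs_treeDist_sub_le hfnn hgnn hM s t).trans (by linarith)
  let mbZ : MeasurableSpace Z := borel Z
  have bZ : BorelSpace Z := ⟨rfl⟩
  have hH : hausdorffDist (range Φ) (range Ψ) ≤ δ := by
    refine hausdorffDist_le_of_mem_dist hδ.le ?_ ?_
    · rintro _ ⟨x, rfl⟩
      obtain ⟨t, rfl⟩ := hPs x
      exact ⟨_, ⟨Q t, rfl⟩, (hPQ t).le⟩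
    · rintro _ ⟨y, rfl⟩
      obtain ⟨t, rfl⟩ := hQs y
      exact ⟨_, ⟨P t, rfl⟩, (dist_comm _ _).trans_le (hPQ t).le⟩
  have hR : dist (Φ Tf.root) (Ψ Tg.root) = δ := by rw [← hP0, ← hQ0, hPQ]
  have hL : levyProkhorovDist (Measure.map Φ Tf.vol) (Measure.map Ψ Tg.vol)
      ≤ δ + |sigmaF f - sigmaF g| := by
    rw [hPv, hQv, Measure.map_map hΦ.continuous.measurable hPc.measurable,
      Measure.map_map hΨ.continuous.measurable hQc.measurable]
    exact levyProkhorovDist_map_restrict_le (hΦ.continuous.comp hPc).measurable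
      (hΨ.continuous.comp hQc).measurable _ _ hδ.le fun t => (hPQ t).le
  have hbdd : BddBelow (ghpSet Tf Tg) := by
    refine ⟨0, ?_⟩
    rintro _ ⟨Z, _, _, _, Φ, Ψ, -, -, -, -, rfl⟩
    have h1 : 0 ≤ hausdorffDist (range Φ) (range Ψ) := hausdorffDist_nonneg
    have h2 : 0 ≤ levyProkhorovDist (Measure.map Φ Tf.vol) (Measure.map Ψ Tg.vol) :=
      ENNReal.toReal_nonneg
    positivity
  have hmem := csInf_le hbdd ⟨Z, mZ, mbZ, bZ, Φ, Ψ, hΦ, hΨ, inferInstance, inferInstance, rfl⟩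
  rw [dcGHP]
  linarith
end

section
/- Let ψ satisfy Assumptions 1 and 2 and let θ > θ_∞. Then ψ_θ(r) → +∞ as r → ∞, the quantity q_θ := sup({0} ∪ {r > 0 : ψ_θ(r) ≤ 0}) is finite, ∫_K^∞ dr/ψ_θ(r) < ∞ for K > q_θ, and for every h > 0 there exists a unique real number b^θ(h) > q_θ with ∫_{b^θ(h)}^∞ dr/ψ_θ(r) = h. Moreover the map h ↦ b^θ(h) is continuously differentiable and strictly decreasing on (0,∞), with ∂_h b^θ(h) = −ψ_θ(b^θ(h)). -/
/-!
Choose `θ₀ ∈ Θ'` with `θ₀ < θ`. On `[θ₀, ∞)` the integral defining `ψ` converges and `ψ` is convex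
(`convexOn_psi`), so `ψ_θ` is convex on `[θ₀ - θ, ∞)`, hence continuous on a neighbourhood of
`[0, ∞)`, and `ψ_θ(0) = 0`. A convex function, positive near infinity, whose reciprocal
is integrable there tends to infinity (`tendsto_atTop_of_convexOn`); thus `ψ_θ → ∞`, `q = q_θ` is finite, `ψ_θ(q) ≤ 0` by
continuity, and `ψ_θ > 0` on `(q, ∞)`.

Let `G(K) = ∫_K^∞ dr/ψ_θ(r)` for `K > q`. It is finite because `ψ_θ(r)` is eventually at least
`ψ(r + θ)/2`, so that the Grey condition applies (`integrableOn_inv_psiShift`). By the fundamental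
theorem of calculus `G' = -1/ψ_θ` on `(q, ∞)` (`hasDerivAt_tail`), and `G` is strictly decreasing
with limit `0` at infinity. At the other end convexity forces `ψ_θ` to vanish at least linearly at
`q`, so `G` is unbounded near `q` (`exists_le_tail_of_convexOn`). Therefore `G` is a bijection from
`(q, ∞)` onto `(0, ∞)`, and its inverse `b` is strictly decreasing, continuous, and satisfies
`b' = 1/G'(b) = -ψ_θ(b)` (`hasDerivAt_inverse_tail`).
-/

open Set Filter

/-- The branching mechanism
`ψ(λ) = αλ + βλ² + ∫_{(0,∞)} (e^{-λx} - 1 + λx 1_{x<1}) Π(dx)`. -/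
noncomputable def psi (α β : ℝ) (ν : MeasureTheory.Measure ℝ) (l : ℝ) : ℝ :=
  α * l + β * l ^ 2 +
    ∫ x, (Real.exp (-(l * x)) - 1 + (if x < 1 then l * x else 0)) ∂ν

/-- `ν` is a Lévy measure on `(0,∞)`: it puts no mass on `(-∞,0]` and integrates
`1 ∧ x²`. -/
def IsLevyMeasure (ν : MeasureTheory.Measure ℝ) : Prop :=
  ν (Set.Iic 0) = 0 ∧ ∫⁻ x, ENNReal.ofReal (min 1 (x ^ 2)) ∂ν ≠ ⊤

/-- The set `Θ' = {θ ∈ ℝ : ∫_{(1,∞)} e^{-θx} Π(dx) < ∞}`. -/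
def ThetaPrime (ν : MeasureTheory.Measure ℝ) : Set ℝ :=
  {θ : ℝ | ∫⁻ x in Set.Ioi 1, ENNReal.ofReal (Real.exp (-(θ * x))) ∂ν ≠ ⊤}

/-- `θ_∞ = inf Θ'` (as an extended real, possibly `-∞`). -/
noncomputable def thetaInf (ν : MeasureTheory.Measure ℝ) : EReal :=
  ⨅ θ ∈ ThetaPrime ν, (θ : EReal)

/-- The shifted branching mechanism `ψ_θ(λ) = ψ(λ+θ) - ψ(θ)`. -/
noncomputable def psiShift (α β : ℝ) (ν : MeasureTheory.Measure ℝ) (θ l : ℝ) : ℝ :=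
  psi α β ν (l + θ) - psi α β ν θ

/-- `γ_θ(λ) = ψ'(λ+θ) - ψ'(θ)`. -/
noncomputable def gammaTheta (α β : ℝ) (ν : MeasureTheory.Measure ℝ) (θ l : ℝ) : ℝ :=
  deriv (psi α β ν) (l + θ) - deriv (psi α β ν) θ

/-- `q_θ = sup({0} ∪ {r > 0 : ψ_θ(r) ≤ 0})`, the largest root region of `ψ_θ`. -/
noncomputable def qTheta (α β : ℝ) (ν : MeasureTheory.Measure ℝ) (θ : ℝ) : ℝ :=
  sSup ({0} ∪ {r : ℝ | 0 < r ∧ psiShift α β ν θ r ≤ 0})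

/-- Assumption 1: `ψ` is conservative (`∫_{0+} du/|ψ(u)| = ∞`) and `β > 0` or
`∫_{(0,1)} x Π(dx) = ∞`. -/
def Assumption1 (α β : ℝ) (ν : MeasureTheory.Measure ℝ) : Prop :=
  (∀ ε > (0:ℝ), ∫⁻ u in Set.Ioc (0:ℝ) ε, ENNReal.ofReal (1 / |psi α β ν u|) = ⊤) ∧
  (0 < β ∨ ∫⁻ x in Set.Ioo (0:ℝ) 1, ENNReal.ofReal x ∂ν = ⊤)

/-- Assumption 2 (Grey condition): `ψ(u) > 0` for large `u` and `∫^∞ du/ψ(u) < ∞`. -/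
def Assumption2 (α β : ℝ) (ν : MeasureTheory.Measure ℝ) : Prop :=
  ∃ M : ℝ, (∀ u, M ≤ u → 0 < psi α β ν u) ∧
    ∫⁻ u in Set.Ioi M, ENNReal.ofReal (1 / psi α β ν u) ≠ ⊤

/-- `ψ` is critical: its right derivative at `0` vanishes (`ψ(0) = 0`, so
`ψ'(0+) = lim_{λ↓0} ψ(λ)/λ`). -/
def IsCritical (α β : ℝ) (ν : MeasureTheory.Measure ℝ) : Prop :=
  Filter.Tendsto (fun l => psi α β ν l / l) (nhdsWithin 0 (Set.Ioi 0)) (nhds 0)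

open MeasureTheory

/-! ### The branching mechanism on `Θ'` -/

lemma abs_exp_sub_one_sub_le (y : ℝ) :
    |Real.exp y - 1 - y| ≤ y ^ 2 * Real.exp |y| := by
  have h := Complex.norm_exp_sub_sum_le_norm_mul_exp (y : ℂ) 2
  simp only [Finset.sum_range_succ, Finset.sum_range_zero, pow_zero, pow_one, Nat.factorial,
    zero_add, Complex.norm_real, Real.norm_eq_abs, sq_abs] at h
  have e : Complex.exp (y : ℂ) - (1 / ((1 : ℕ) : ℂ) + (y : ℂ) / (((1 : ℕ) * 1 : ℕ) : ℂ))
      = ((Real.exp y - 1 - y : ℝ) : ℂ) := by push_cast; ring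
  rw [show ((0 + 1) * 1 : ℕ) = 1 * 1 from rfl] at h
  rw [e, Complex.norm_real, Real.norm_eq_abs] at h
  exact h

/-- On `[θ₀, ∞)` with `θ₀ ∈ Θ'` the Bochner integral defining `ψ` is a genuine one: the integrand is
dominated by a multiple of `1 ∧ x²` plus `e^{-θ₀ x} 1_{x > 1}`. -/
lemma integrable_psi_integrand {ν : Measure ℝ} (hν : IsLevyMeasure ν) {θ₀ l : ℝ}
    (hθ₀ : θ₀ ∈ ThetaPrime ν) (hl : θ₀ ≤ l) :
    Integrable (fun x => Real.exp (-(l * x)) - 1 + (if x < 1 then l * x else 0)) ν := by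
  have hm : Integrable (fun x : ℝ => min 1 (x ^ 2)) ν :=
    (lintegral_ofReal_ne_top_iff_integrable (by fun_prop)
      (ae_of_all _ fun x => by positivity)).1 hν.2
  have he : Integrable ((Ioi (1 : ℝ)).indicator fun x => Real.exp (-(θ₀ * x))) ν := by
    rw [integrable_indicator_iff measurableSet_Ioi]
    exact (lintegral_ofReal_ne_top_iff_integrable (by fun_prop)
      (ae_of_all _ fun x => (Real.exp_pos _).le)).1 hθ₀
  refine Integrable.mono' ((hm.const_mul (l ^ 2 * Real.exp |l| + Real.exp |l| + 1)).add he) ?_ ?_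
  · refine Measurable.aestronglyMeasurable ?_
    refine Measurable.add (by fun_prop) ?_
    exact Measurable.ite measurableSet_Iio (by fun_prop) measurable_const
  · have hpos : ∀ᵐ x ∂ν, 0 < x := by
      rw [ae_iff]
      convert hν.1 using 2
      ext x; simp
    filter_upwards [hpos] with x hx
    have hE := Real.exp_pos |l|
    rw [Real.norm_eq_abs, Pi.add_apply]
    rcases lt_or_ge x 1 with h | h
    · have hx2 : x ^ 2 ≤ 1 := by nlinarith
      rw [if_pos h, min_eq_right hx2, indicator_of_notMem (by simp [h.le])]
      have := abs_exp_sub_one_sub_le (-(l * x))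
      rw [sub_neg_eq_add, abs_neg] at this
      have h3 : Real.exp |l * x| ≤ Real.exp |l| := by
        rw [Real.exp_le_exp, abs_mul, abs_of_pos hx]
        nlinarith [abs_nonneg l]
      have h4 : (-(l * x)) ^ 2 * Real.exp |l * x| ≤ (-(l * x)) ^ 2 * Real.exp |l| := by gcongr
      nlinarith [sq_nonneg x, mul_nonneg (sq_nonneg x) hE.le]
    · have hx2 : 1 ≤ x ^ 2 := by nlinarith
      rw [if_neg h.not_gt, min_eq_left hx2, add_zero, mul_one]
      have hl2 : 0 ≤ l ^ 2 * Real.exp |l| := by positivity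
      have hp := Real.exp_pos (-(l * x))
      have habs : |Real.exp (-(l * x)) - 1| ≤ Real.exp (-(l * x)) + 1 := by
        rw [abs_le]; constructor <;> linarith
      rcases h.eq_or_lt with rfl | h1
      · rw [indicator_of_notMem (by simp)]
        have : Real.exp (-(l * 1)) ≤ Real.exp |l| :=
          Real.exp_le_exp.2 (by rw [mul_one]; exact neg_le_abs l)
        linarith
      · rw [indicator_of_mem (mem_Ioi.2 h1)]
        have : Real.exp (-(l * x)) ≤ Real.exp (-(θ₀ * x)) :=
          Real.exp_le_exp.2 (by nlinarith)
        linarith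

/-- The integrand of `ψ` is convex in `λ` for each `x`, its compensator being linear in `λ`. -/
lemma convexOn_psi {α β : ℝ} (hβ : 0 ≤ β) {ν : Measure ℝ} (hν : IsLevyMeasure ν) {θ₀ : ℝ}
    (hθ₀ : θ₀ ∈ ThetaPrime ν) : ConvexOn ℝ (Ici θ₀) (psi α β ν) := by
  refine ⟨convex_Ici _, fun x hx y hy a b ha hb hab => ?_⟩
  have hz : θ₀ ≤ a * x + b * y := by
    have := (convex_Ici θ₀) hx hy ha hb hab
    simpa using this
  have ix := (integrable_psi_integrand hν hθ₀ hx).const_mul a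
  have iy := (integrable_psi_integrand hν hθ₀ hy).const_mul b
  have hint := integral_mono (integrable_psi_integrand hν hθ₀ hz) (ix.add iy) (fun t => by
    have h := convexOn_exp.2 (mem_univ (-(x * t))) (mem_univ (-(y * t))) ha hb hab
    simp only [smul_eq_mul] at h
    rw [show a * -(x * t) + b * -(y * t) = -((a * x + b * y) * t) by ring] at h
    simp only [Pi.add_apply]
    split_ifs <;> nlinarith)
  rw [integral_add' ix iy, integral_const_mul, integral_const_mul] at hint
  simp only [psi, smul_eq_mul]
  have hsq : (a * x + b * y) ^ 2 ≤ a * x ^ 2 + b * y ^ 2 := by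
    obtain rfl : b = 1 - a := by linarith
    nlinarith [mul_nonneg (mul_nonneg ha hb) (sq_nonneg (x - y))]
  have := mul_le_mul_of_nonneg_left hsq hβ
  linarith

/-- A convex `g`, positive near `∞` with `1/g` integrable there, is not bounded by a constant on a
half-line (the integral would be infinite). So `g N < g v` for some `N < v`, and the slope of this
secant bounds the growth of `g` beyond `v` from below. -/
lemma tendsto_atTop_of_convexOn {g : ℝ → ℝ} {a M : ℝ} (hg : ConvexOn ℝ (Ici a) g)
    (hpos : ∀ u, M ≤ u → 0 < g u)
    (hint : ∫⁻ u in Ioi M, ENNReal.ofReal (1 / g u) ≠ ⊤) : Tendsto g atTop atTop := by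
  set N := max a M
  have hNa : a ≤ N := le_max_left _ _
  have hNM : M ≤ N := le_max_right _ _
  obtain ⟨v, hv, hgv⟩ : ∃ v, N < v ∧ g N < g v := by
    by_contra! hcon
    refine hint (top_le_iff.1 ?_)
    calc (⊤ : ENNReal) = ∫⁻ _ in Ioi N, ENNReal.ofReal (1 / g N) := by
          rw [setLIntegral_const, Real.volume_Ioi, ENNReal.mul_top]
          have := hpos N hNM
          simpa using this
      _ ≤ ∫⁻ u in Ioi N, ENNReal.ofReal (1 / g u) := by
          refine setLIntegral_mono' measurableSet_Ioi fun u hu => ?_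
          have := hpos u (hNM.trans (le_of_lt hu))
          exact ENNReal.ofReal_le_ofReal (one_div_le_one_div_of_le this (hcon u hu))
      _ ≤ _ := lintegral_mono_set (Ioi_subset_Ioi hNM)
  set s := (g v - g N) / (v - N)
  have hs : 0 < s := div_pos (by linarith) (by linarith)
  have hlin : Tendsto (fun w => g v + s * (w - v)) atTop atTop :=
    tendsto_atTop_add_const_left _ _
      ((tendsto_atTop_add_const_right _ (-v) tendsto_id).const_mul_atTop hs)
  refine tendsto_atTop_mono' _ ?_ hlin
  filter_upwards [eventually_gt_atTop v] with w hw
  have := hg.slope_mono_adjacent (x := N) (y := v) (z := w) hNa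
    (mem_Ici.2 (by linarith)) hv hw
  rw [le_div_iff₀ (by linarith)] at this
  change s * (w - v) ≤ _ at this
  linarith

/-! ### The tail integral and its inverse

Here `f` is positive and `1/f` is integrable on `(K, ∞)` for every `K > q`; the function studied is
`K ↦ ∫_K^∞ dr/f(r)` on `(q, ∞)`. -/

section TailIntegral

variable {f : ℝ → ℝ} {q : ℝ}

lemma tail_sub_tail (hint : ∀ K, q < K → IntegrableOn (fun r => (f r)⁻¹) (Ioi K)) {K L : ℝ}
    (hK : q < K) (hL : q < L) :
    ∫ r in Ioi L, (f r)⁻¹ = (∫ r in Ioi K, (f r)⁻¹) - ∫ r in K..L, (f r)⁻¹ := by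
  rw [← intervalIntegral.integral_Ioi_sub_Ioi' (hint K hK) (hint L hL)]; ring

lemma intervalIntegrable_tail (hint : ∀ K, q < K → IntegrableOn (fun r => (f r)⁻¹) (Ioi K))
    {K L : ℝ} (hK : q < K) (hL : q < L) :
    IntervalIntegrable (fun r => (f r)⁻¹) volume K L := by
  rw [intervalIntegrable_iff]
  exact (hint _ (lt_min hK hL)).mono_set (fun x hx => hx.1)

lemma strictAntiOn_tail (hpos : ∀ r, q < r → 0 < f r)
    (hint : ∀ K, q < K → IntegrableOn (fun r => (f r)⁻¹) (Ioi K)) :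
    StrictAntiOn (fun K => ∫ r in Ioi K, (f r)⁻¹) (Ioi q) := by
  intro K hK L hL hKL
  have hK' : q < K := hK
  have := intervalIntegral.intervalIntegral_pos_of_pos_on (intervalIntegrable_tail hint hK hL)
    (fun x hx => inv_pos.2 (hpos x (hK'.trans hx.1))) hKL
  simp only [tail_sub_tail hint hK hL]
  linarith

lemma hasDerivAt_tail (hc : ContinuousOn f (Ioi q)) (hpos : ∀ r, q < r → 0 < f r)
    (hint : ∀ K, q < K → IntegrableOn (fun r => (f r)⁻¹) (Ioi K)) {L : ℝ} (hL : q < L) :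
    HasDerivAt (fun K => ∫ r in Ioi K, (f r)⁻¹) (-(f L)⁻¹) L := by
  have hci : ContinuousOn (fun r => (f r)⁻¹) (Ioi q) := hc.inv₀ fun r hr => (hpos r hr).ne'
  have hd := intervalIntegral.integral_hasDerivAt_right
    (intervalIntegrable_tail hint hL hL)
    (hci.stronglyMeasurableAtFilter isOpen_Ioi L hL) (hci.continuousAt (Ioi_mem_nhds hL))
  refine (hd.const_sub (∫ r in Ioi L, (f r)⁻¹)).congr_of_eventuallyEq ?_
  filter_upwards [Ioi_mem_nhds hL] with u hu
  exact tail_sub_tail hint hL hu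

lemma existsUnique_tail_eq (hc : ContinuousOn f (Ioi q)) (hpos : ∀ r, q < r → 0 < f r)
    (hint : ∀ K, q < K → IntegrableOn (fun r => (f r)⁻¹) (Ioi K))
    (hdiv : ∀ h, 0 < h → ∃ K, q < K ∧ h ≤ ∫ r in Ioi K, (f r)⁻¹) {h : ℝ} (hh : 0 < h) :
    ∃! b, q < b ∧ ∫ r in Ioi b, (f r)⁻¹ = h := by
  obtain ⟨K, hK, hKh⟩ := hdiv h hh
  have h0 : Tendsto (fun K => ∫ r in Ioi K, (f r)⁻¹) atTop (nhds 0) :=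
    tendsto_integral_Ioi_zero tendsto_id
  obtain ⟨L, hLh, hKL⟩ := ((h0.eventually_le_const hh).and (eventually_ge_atTop K)).exists
  have hG : ContinuousOn (fun K => ∫ r in Ioi K, (f r)⁻¹) (Icc K L) := fun x hx =>
    (hasDerivAt_tail hc hpos hint (hK.trans_le hx.1)).continuousAt.continuousWithinAt
  obtain ⟨b, hb, hbh⟩ := intermediate_value_Icc' hKL hG ⟨hLh, hKh⟩
  refine ⟨b, ⟨hK.trans_le hb.1, hbh⟩, fun y hy => ?_⟩
  exact (strictAntiOn_tail hpos hint).injOn hy.1 (hK.trans_le hb.1) (hy.2.trans hbh.symm)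

lemma strictAntiOn_inverse_tail (hpos : ∀ r, q < r → 0 < f r)
    (hint : ∀ K, q < K → IntegrableOn (fun r => (f r)⁻¹) (Ioi K)) {b : ℝ → ℝ}
    (hb : ∀ h, 0 < h → q < b h ∧ ∫ r in Ioi (b h), (f r)⁻¹ = h) :
    StrictAntiOn b (Ioi 0) := by
  intro h hh k hk hhk
  have := (strictAntiOn_tail hpos hint).lt_iff_gt (hb h hh).1 (hb k hk).1
  simp only [(hb h hh).2, (hb k hk).2] at this
  exact this.1 hhk

/-- Any right inverse `b` of the strictly decreasing tail integral is continuous: for `y < b h < z` the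
tail integrals at `y` and `z` bracket `h`, and `b` maps the interval between them into `(y, z)`. -/
lemma continuousAt_inverse_tail (hpos : ∀ r, q < r → 0 < f r)
    (hint : ∀ K, q < K → IntegrableOn (fun r => (f r)⁻¹) (Ioi K)) {b : ℝ → ℝ}
    (hb : ∀ h, 0 < h → q < b h ∧ ∫ r in Ioi (b h), (f r)⁻¹ = h) {h : ℝ} (hh : 0 < h) :
    ContinuousAt b h := by
  have hanti := strictAntiOn_tail hpos hint
  obtain ⟨hq, hbh⟩ := hb h hh
  refine tendsto_order.2 ⟨fun x hx => ?_, fun x hx => ?_⟩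
  -- A lower bound `x` may lie to the left of `q`, so it is first moved up inside `(q, b h)`.
  · have hm : q < max x ((q + b h) / 2) := lt_max_of_lt_right (by linarith)
    have hlt : h < ∫ r in Ioi (max x ((q + b h) / 2)), (f r)⁻¹ := by
      conv_lhs => rw [← hbh]
      exact hanti hm hq (max_lt hx (by linarith))
    filter_upwards [Iio_mem_nhds hlt, Ioi_mem_nhds hh] with k hk hk0
    have := hanti.lt_iff_gt (hb k hk0).1 hm
    simp only [(hb k hk0).2] at this
    exact (le_max_left _ _).trans_lt (this.1 hk)
  · have hlt : ∫ r in Ioi x, (f r)⁻¹ < h := by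
      conv_rhs => rw [← hbh]
      exact hanti hq (hq.trans hx) hx
    filter_upwards [Ioi_mem_nhds hlt, Ioi_mem_nhds hh] with k hk hk0
    have := hanti.lt_iff_gt (mem_Ioi.2 (hq.trans hx)) (hb k hk0).1
    simp only [(hb k hk0).2] at this
    exact this.1 hk

lemma hasDerivAt_inverse_tail (hc : ContinuousOn f (Ioi q)) (hpos : ∀ r, q < r → 0 < f r)
    (hint : ∀ K, q < K → IntegrableOn (fun r => (f r)⁻¹) (Ioi K)) {b : ℝ → ℝ}
    (hb : ∀ h, 0 < h → q < b h ∧ ∫ r in Ioi (b h), (f r)⁻¹ = h) {h : ℝ} (hh : 0 < h) :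
    HasDerivAt b (-f (b h)) h := by
  have hq := (hb h hh).1
  have := HasDerivAt.of_local_left_inverse (continuousAt_inverse_tail hpos hint hb hh)
    (hasDerivAt_tail hc hpos hint hq) (neg_ne_zero.2 (inv_ne_zero (hpos _ hq).ne'))
    (by filter_upwards [Ioi_mem_nhds hh] with k hk using (hb k hk).2)
  rwa [inv_neg, inv_inv] at this

end TailIntegral

/-! ### The two ends of the tail integral of `1/ψ_θ` -/

/-- The tail integral is unbounded as `K ↓ q`. Convexity and `f q ≤ 0` give the linear bound
`f r ≤ f (q + 1) (r - q)` on `(q, q + 1]`, so that `1/f` dominates a multiple of `1/(r - q)`. -/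
lemma exists_le_tail_of_convexOn {f : ℝ → ℝ} {q : ℝ} (hf : ConvexOn ℝ (Ici q) f)
    (hfq : f q ≤ 0) (hpos : ∀ r, q < r → 0 < f r)
    (hint : ∀ K, q < K → IntegrableOn (fun r => (f r)⁻¹) (Ioi K)) {h : ℝ} (hh : 0 < h) :
    ∃ K, q < K ∧ h ≤ ∫ r in Ioi K, (f r)⁻¹ := by
  set c := f (q + 1)
  have hc : 0 < c := hpos _ (by linarith)
  have hbound : ∀ r, q < r → r ≤ q + 1 → f r ≤ c * (r - q) := by
    intro r h1 h2
    have := hf.2 (mem_Ici.2 le_rfl) (mem_Ici.2 (show q ≤ q + 1 by linarith))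
      (show 0 ≤ 1 - (r - q) by linarith) (show 0 ≤ r - q by linarith) (by ring)
    simp only [smul_eq_mul] at this
    rw [show (1 - (r - q)) * q + (r - q) * (q + 1) = r by ring] at this
    change f r ≤ _ + (r - q) * c at this
    nlinarith
  -- The value of `e` making `∫_{q+e}^{q+1} dr / (c (r - q))` equal to `h`.
  set e := Real.exp (-(c * h))
  have he : 0 < e := Real.exp_pos _
  have he1 : e ≤ 1 := Real.exp_le_one_iff.2 (by nlinarith)
  refine ⟨q + e, by linarith, ?_⟩
  have hval : ∫ r in (q + e)..(q + 1), c⁻¹ * (r - q)⁻¹ = h := by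
    rw [intervalIntegral.integral_const_mul,
      intervalIntegral.integral_comp_sub_right (fun r => r⁻¹) q, add_sub_cancel_left,
      add_sub_cancel_left, integral_inv_of_pos he one_pos, one_div, Real.log_inv, Real.log_exp]
    field_simp
  have htail : 0 ≤ ∫ r in Ioi (q + 1), (f r)⁻¹ :=
    setIntegral_nonneg measurableSet_Ioi fun r hr => by
      have hr' : q + 1 < r := hr
      exact (inv_pos.2 (hpos r (by linarith))).le
  have hle : ∫ r in (q + e)..(q + 1), c⁻¹ * (r - q)⁻¹ ≤ ∫ r in (q + e)..(q + 1), (f r)⁻¹ := by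
    refine intervalIntegral.integral_mono_on (by linarith) ?_
      (intervalIntegrable_tail hint (by linarith) (by linarith)) fun r hr => ?_
    · refine ContinuousOn.intervalIntegrable_of_Icc (by linarith) ?_
      refine continuousOn_const.mul (ContinuousOn.inv₀ (by fun_prop) fun r hr => ?_)
      have := hr.1
      exact (by linarith : (0 : ℝ) < r - q).ne'
    · have h1 : q < r := by linarith [hr.1]
      rw [← mul_inv]
      exact inv_anti₀ (hpos r h1) (hbound r h1 hr.2)
  have := tail_sub_tail hint (K := q + e) (L := q + 1) (by linarith) (by linarith)
  linarith

/-- For large `r`, `ψ_θ(r) ≥ |ψ(θ)|`, whence `ψ(r + θ) ≤ 2 ψ_θ(r)` and the Grey condition controls the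
tail; the remaining compact part of `(K, ∞)` is handled by continuity. -/
lemma integrableOn_inv_psiShift {α β : ℝ} {ν : Measure ℝ} (h2 : Assumption2 α β ν) {θ q : ℝ}
    (htop : Tendsto (psiShift α β ν θ) atTop atTop)
    (hc : ContinuousOn (psiShift α β ν θ) (Ioi q)) (hpos : ∀ r, q < r → 0 < psiShift α β ν θ r)
    {K : ℝ} (hK : q < K) : IntegrableOn (fun r => (psiShift α β ν θ r)⁻¹) (Ioi K) := by
  obtain ⟨M, hM, hint⟩ := h2
  have hci : ContinuousOn (fun r => (psiShift α β ν θ r)⁻¹) (Ioi q) :=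
    hc.inv₀ fun r hr => (hpos r hr).ne'
  obtain ⟨L, hL⟩ := eventually_atTop.1 ((htop.eventually_ge_atTop |psi α β ν θ|).and
    ((eventually_ge_atTop K).and (eventually_ge_atTop (M - θ))))
  obtain ⟨-, hKL, hML⟩ := hL L le_rfl
  have hqL : q < L := hK.trans_le hKL
  rw [← Ioc_union_Ioi_eq_Ioi hKL]
  refine IntegrableOn.union ?_ ?_
  · exact ((hci.mono fun x hx => hK.trans_le hx.1).integrableOn_Icc).mono_set Ioc_subset_Icc_self
  · refine (lintegral_ofReal_ne_top_iff_integrable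
      ((hci.mono (Ioi_subset_Ioi hqL.le)).aestronglyMeasurable measurableSet_Ioi) ?_).1 ?_
    · filter_upwards [ae_restrict_mem measurableSet_Ioi] with r hr
      exact (inv_pos.2 (hpos r (hqL.trans hr))).le
    · have hshift : ∫⁻ r in Ioi L, ENNReal.ofReal (1 / psi α β ν (r + θ))
          ≤ ∫⁻ u in Ioi M, ENNReal.ofReal (1 / psi α β ν u) := by
        have := (measurePreserving_add_right (volume : Measure ℝ) θ).setLIntegral_comp_emb
          (measurableEmbedding_addRight θ) (fun u => ENNReal.ofReal (1 / psi α β ν u)) (Ioi L)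
        rw [this]
        refine lintegral_mono_set ?_
        rintro _ ⟨r, hr, rfl⟩
        have : L < r := hr
        exact mem_Ioi.2 (by linarith)
      have hle : ∫⁻ r in Ioi L, ENNReal.ofReal (psiShift α β ν θ r)⁻¹
          ≤ ∫⁻ r in Ioi L, 2 * ENNReal.ofReal (1 / psi α β ν (r + θ)) := by
        refine setLIntegral_mono' measurableSet_Ioi fun r hr => ?_
        have hr' : L < r := hr
        have h1 := (hL r hr'.le).1
        have h3 := hM (r + θ) (by linarith)
        have h4 := neg_abs_le (psi α β ν θ)
        have h5 := le_abs_self (psi α β ν θ)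
        have h6 := hpos r (hqL.trans hr)
        rw [show (2 : ENNReal) = ENNReal.ofReal 2 by simp, ← ENNReal.ofReal_mul (by norm_num)]
        refine ENNReal.ofReal_le_ofReal ?_
        rw [mul_one_div, inv_le_comm₀ h6 (by positivity), inv_div, div_le_iff₀ (by norm_num)]
        unfold psiShift at h1 ⊢
        linarith
      refine ne_top_of_le_ne_top ?_ hle
      rw [lintegral_const_mul' _ _ (by simp)]
      exact ENNReal.mul_ne_top (by simp) (ne_top_of_le_ne_top hint hshift)

/-! ### The inverse function `b^θ` -/

/-- For `θ > θ_∞`: `ψ_θ(r) → ∞` as `r → ∞`; `q_θ = sup({0} ∪ {r>0 : ψ_θ(r) ≤ 0})` is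
finite; `∫_K^∞ dr/ψ_θ(r) < ∞` for `K > q_θ`; for each `h > 0` there is a unique
`b^θ(h) > q_θ` with `∫_{b^θ(h)}^∞ dr/ψ_θ(r) = h`; and `h ↦ b^θ(h)` is continuously
differentiable and strictly decreasing on `(0,∞)` with `∂_h b^θ(h) = -ψ_θ(b^θ(h))`. -/
theorem bTheta_exists_unique_and_smooth (α β : ℝ) (hβ : 0 ≤ β)
    (ν : MeasureTheory.Measure ℝ) (hν : IsLevyMeasure ν)
    (h1 : Assumption1 α β ν) (h2 : Assumption2 α β ν)
    (θ : ℝ) (hθ : thetaInf ν < (θ : EReal)) :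
    Filter.Tendsto (psiShift α β ν θ) Filter.atTop Filter.atTop ∧
    BddAbove ({0} ∪ {r : ℝ | 0 < r ∧ psiShift α β ν θ r ≤ 0}) ∧
    (∀ K : ℝ, qTheta α β ν θ < K →
      ∫⁻ r in Set.Ioi K, ENNReal.ofReal (1 / psiShift α β ν θ r) ≠ ⊤) ∧
    (∀ h : ℝ, 0 < h → ∃! bh : ℝ, qTheta α β ν θ < bh ∧
      ∫ r in Set.Ioi bh, (psiShift α β ν θ r)⁻¹ = h) ∧
    (∀ b : ℝ → ℝ,
      (∀ h, 0 < h → qTheta α β ν θ < b h ∧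
        ∫ r in Set.Ioi (b h), (psiShift α β ν θ r)⁻¹ = h) →
      StrictAntiOn b (Set.Ioi 0) ∧
      (∀ h, 0 < h → HasDerivAt b (-psiShift α β ν θ (b h)) h) ∧
      ContinuousOn (fun h => -psiShift α β ν θ (b h)) (Set.Ioi 0)) := by
  obtain ⟨θ₀, hθ₀, hlt⟩ : ∃ θ₀ ∈ ThetaPrime ν, θ₀ < θ := by
    simpa [thetaInf, iInf_lt_iff] using hθ
  have hψ := convexOn_psi (α := α) hβ hν hθ₀
  have hconv : ConvexOn ℝ (Ici (θ₀ - θ)) (psiShift α β ν θ) := by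
    have := (hψ.translate_left θ).add_const (-psi α β ν θ)
    refine (this.congr fun r _ => ?_).subset (fun r hr => ?_) (convex_Ici _)
    · simp [psiShift, sub_eq_add_neg]
    · have : θ₀ - θ ≤ r := hr
      simp only [mem_preimage, mem_Ici]
      linarith
  have hcont : ContinuousOn (psiShift α β ν θ) (Ici 0) := by
    have := hconv.continuousOn_interior
    rw [interior_Ici] at this
    exact this.mono (Ici_subset_Ioi.2 (by linarith))
  have htop : Tendsto (psiShift α β ν θ) atTop atTop := by
    have hψtop : Tendsto (psi α β ν) atTop atTop := by
      obtain ⟨M, hM, hint⟩ := h2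
      exact tendsto_atTop_of_convexOn hψ hM hint
    exact tendsto_atTop_add_const_right _ (-psi α β ν θ)
      (hψtop.comp (tendsto_atTop_add_const_right _ θ tendsto_id))
  have h0 : psiShift α β ν θ 0 = 0 := by simp [psiShift]
  set S : Set ℝ := {0} ∪ {r : ℝ | 0 < r ∧ psiShift α β ν θ r ≤ 0} with hS
  have hbdd : BddAbove S := by
    obtain ⟨L, hL⟩ := eventually_atTop.1 (htop.eventually_gt_atTop 0)
    refine ⟨max 0 L, ?_⟩
    rintro r (rfl | ⟨-, hr⟩)
    · exact le_max_left _ _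
    · refine le_max_of_le_right (le_of_not_gt fun h => ?_)
      exact (hL r h.le).not_ge hr
  have hSeq : S = Ici 0 ∩ psiShift α β ν θ ⁻¹' Iic 0 := by
    ext r
    constructor
    · rintro (rfl | ⟨h, hr⟩)
      · exact ⟨self_mem_Ici, h0.le⟩
      · exact ⟨h.le, hr⟩
    · rintro ⟨h, hr⟩
      rcases (mem_Ici.1 h).eq_or_lt with rfl | h
      · exact Or.inl rfl
      · exact Or.inr ⟨h, hr⟩
  -- Closedness of `S` puts the supremum `q` in `S`, which yields `ψ_θ(q) ≤ 0`.
  have hclosed : IsClosed S := hSeq ▸ hcont.preimage_isClosed_of_isClosed isClosed_Ici isClosed_Iic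
  have hqS : qTheta α β ν θ ∈ S := hclosed.csSup_mem ⟨0, Or.inl rfl⟩ hbdd
  set q := qTheta α β ν θ with hq
  have hq' := hSeq ▸ hqS
  have hq0 : 0 ≤ q := hq'.1
  have hpos : ∀ r, q < r → 0 < psiShift α β ν θ r := fun r hr => by
    by_contra! hcon
    exact hr.not_ge (le_csSup hbdd (Or.inr ⟨hq0.trans_lt hr, hcon⟩))
  have hc : ContinuousOn (psiShift α β ν θ) (Ioi q) :=
    hcont.mono fun r hr => hq0.trans (le_of_lt hr)
  have hint : ∀ K, q < K → MeasureTheory.IntegrableOn (fun r => (psiShift α β ν θ r)⁻¹) (Ioi K) :=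
    fun K hK => integrableOn_inv_psiShift h2 htop hc hpos hK
  have hdiv : ∀ h, 0 < h → ∃ K, q < K ∧ h ≤ ∫ r in Ioi K, (psiShift α β ν θ r)⁻¹ := fun h hh =>
    exists_le_tail_of_convexOn
      (hconv.subset (Ici_subset_Ici.2 (by linarith)) (convex_Ici _)) hq'.2 hpos hint hh
  refine ⟨htop, hbdd, fun K hK => ?_, fun h hh => existsUnique_tail_eq hc hpos hint hdiv hh,
    fun b hb => ⟨strictAntiOn_inverse_tail hpos hint hb,
      fun h hh => hasDerivAt_inverse_tail hc hpos hint hb hh, fun h hh => ?_⟩⟩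
  · simp only [one_div]
    exact (hint K hK).lintegral_lt_top.ne
  · have hbh := (hb h hh).1
    exact ((hc.continuousAt (Ioi_mem_nhds hbh)).comp
      (continuousAt_inverse_tail hpos hint hb hh)).neg.continuousWithinAt
end

section
/- Let ψ satisfy Assumptions 1 and 2 and assume ψ is critical, i.e. ψ'(0+) = 0, and that θ_∞ < 0. Let θ_∞ < θ < 0. Then there is a unique θ̄ > 0 with ψ(θ̄) = ψ(θ), and for every h > 0: θ̄ + b^{θ̄}(h) = θ + b^θ(h) and ψ_{θ̄}(b^{θ̄}(h)) = ψ_θ(b^θ(h)). -/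
/-!
Convexity of `ψ` carries the argument. On `(θ_∞, ∞)` the integral defining `ψ` converges
(`integrable_psiKernel`), and the second half of `Assumption1`, which forces `β > 0` or `Π ≠ 0`,
makes `ψ` strictly convex there (`strictConvexOn_psi`). Together with `ψ(0) = 0` and `ψ'(0+) = 0`,
this gives that `ψ` is positive away from `0` (`pos_of_critical`) and increases strictly from `0`
to `∞` on `[0, ∞)`; the intermediate value theorem then provides the unique `θ̄`.

Because `θ̄ - θ` is a positive root of `ψ_θ`, `q_θ ≥ θ̄ - θ`, while `q_θ̄ ≥ 0` by definition. Put
`B = θ + b^θ(h)` and `B' = θ̄ + b^θ̄(h)`; both exceed `θ̄`. A translation of the integration variable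
turns the two defining equations into
`∫_B^∞ dr / (ψ(r) - ψ(θ)) = h = ∫_{B'}^∞ dr / (ψ(r) - ψ(θ))`. The integrand is positive
beyond `θ̄`, so `B = B'` (`eq_of_tail_integral_eq`). Both identities follow at once.
-/

open Set Filter

open MeasureTheory

/-! ### Convergence of the integral defining `ψ` -/

/-- The integrand `e^{-λx} - 1 + λx 1_{x<1}` in the definition of `ψ(λ)`. -/
noncomputable def psiKernel (l x : ℝ) : ℝ :=
  Real.exp (-(l * x)) - 1 + (if x < 1 then l * x else 0)

lemma measurable_psiKernel (l : ℝ) : Measurable (psiKernel l) := by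
  unfold psiKernel
  refine Measurable.add (by fun_prop) ?_
  exact Measurable.ite measurableSet_Iio (by fun_prop) measurable_const

lemma abs_psiKernel_le {θ₀ l x : ℝ} (hl : θ₀ ≤ l) (hx : 0 < x) :
    |psiKernel l x| ≤ (l ^ 2 * Real.exp |l| + 1 + Real.exp |l|) * min 1 (x ^ 2) +
      (Ioi (1 : ℝ)).indicator (fun y => Real.exp (-(θ₀ * y))) x := by
  have hE : 0 < Real.exp |l| := Real.exp_pos _
  unfold psiKernel
  rcases lt_trichotomy x 1 with h | h | h
  · have h1 : min 1 (x ^ 2) = x ^ 2 := min_eq_right (by nlinarith)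
    have h2 : x ∉ Ioi (1 : ℝ) := by simp [h.le]
    rw [if_pos h, h1, indicator_of_notMem h2]
    -- second-order Taylor remainder of `exp` at `-λx`, with `|λx| ≤ |λ|`
    have key := Complex.norm_exp_sub_sum_le_norm_mul_exp ((-(l * x) : ℝ) : ℂ) 2
    have e : Complex.exp ((-(l * x) : ℝ) : ℂ) -
        ∑ m ∈ Finset.range 2, ((-(l * x) : ℝ) : ℂ) ^ m / (m.factorial : ℂ) =
        ((Real.exp (-(l * x)) - 1 + l * x : ℝ) : ℂ) := by
      simp [Finset.sum_range_succ]; ring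
    rw [e, Complex.norm_real, Complex.norm_real, Real.norm_eq_abs, Real.norm_eq_abs, sq_abs,
      abs_neg] at key
    have h3 : |l * x| ≤ |l| := by
      rw [abs_mul, abs_of_pos hx]; nlinarith [abs_nonneg l]
    have h4 : Real.exp |l * x| ≤ Real.exp |l| := Real.exp_le_exp.2 h3
    have h5 : (-(l * x)) ^ 2 * Real.exp |l * x| ≤ (-(l * x)) ^ 2 * Real.exp |l| :=
      mul_le_mul_of_nonneg_left h4 (sq_nonneg _)
    nlinarith [sq_nonneg x, mul_nonneg (sq_nonneg x) hE.le]
  · subst h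
    have h4 : Real.exp (-(l * 1)) ≤ Real.exp |l| :=
      Real.exp_le_exp.2 (by rw [mul_one]; exact neg_le_abs l)
    have h5 := Real.exp_pos (-(l * 1))
    have h6 : 0 ≤ l ^ 2 * Real.exp |l| := by positivity
    simp only [lt_irrefl, if_false, mem_Ioi, not_false_eq_true, indicator_of_notMem, one_pow,
      min_self, mul_one, add_zero] at *
    rw [abs_le]; constructor <;> linarith
  · have h1 : min 1 (x ^ 2) = 1 := min_eq_left (by nlinarith)
    have h2 : x ∈ Ioi (1 : ℝ) := h
    rw [if_neg h.le.not_gt, h1, indicator_of_mem h2]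
    have h4 : Real.exp (-(l * x)) ≤ Real.exp (-(θ₀ * x)) :=
      Real.exp_le_exp.2 (by nlinarith)
    have h5 := Real.exp_pos (-(l * x))
    have h6 : 0 ≤ l ^ 2 * Real.exp |l| := by positivity
    rw [abs_le]; constructor <;> linarith

lemma ae_pos_of_isLevyMeasure {ν : Measure ℝ} (hν : IsLevyMeasure ν) : ∀ᵐ x ∂ν, 0 < x := by
  rw [ae_iff]
  simpa [Set.Iic] using hν.1

lemma integrable_psiKernel {ν : Measure ℝ} (hν : IsLevyMeasure ν) {θ₀ l : ℝ}
    (h₀ : θ₀ ∈ ThetaPrime ν) (hl : θ₀ ≤ l) : Integrable (psiKernel l) ν := by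
  have i1 : Integrable (fun x : ℝ => min 1 (x ^ 2)) ν := by
    rw [← lintegral_ofReal_ne_top_iff_integrable]
    · exact hν.2
    · exact Measurable.aestronglyMeasurable (by fun_prop)
    · exact ae_of_all _ fun x => le_min zero_le_one (sq_nonneg x)
  have i2 : Integrable ((Ioi (1 : ℝ)).indicator (fun y => Real.exp (-(θ₀ * y)))) ν := by
    rw [integrable_indicator_iff measurableSet_Ioi, IntegrableOn,
      ← lintegral_ofReal_ne_top_iff_integrable]
    · exact h₀
    · exact Measurable.aestronglyMeasurable (by fun_prop)
    · exact ae_of_all _ fun x => (Real.exp_pos _).le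
  refine ((i1.const_mul (l ^ 2 * Real.exp |l| + 1 + Real.exp |l|)).add i2).mono'
    (measurable_psiKernel l).aestronglyMeasurable ?_
  filter_upwards [ae_pos_of_isLevyMeasure hν] with x hx
  exact abs_psiKernel_le hl hx

/-! ### Strict convexity of `ψ` -/

/-- The linear compensator cancels in the convexity gap of the kernel, which leaves that of `exp`. -/
lemma psiKernel_gap (p q s t x : ℝ) (hst : s + t = 1) :
    s * psiKernel p x + t * psiKernel q x - psiKernel (s * p + t * q) x =
      s * Real.exp (-(p * x)) + t * Real.exp (-(q * x)) -
        Real.exp (s * -(p * x) + t * -(q * x)) := by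
  have : s * -(p * x) + t * -(q * x) = -((s * p + t * q) * x) := by ring
  unfold psiKernel
  rw [this]
  have hs : s = 1 - t := by linarith
  split_ifs <;> subst hs <;> ring

lemma psiKernel_gap_pos {p q s t x : ℝ} (hs : 0 < s) (ht : 0 < t) (hst : s + t = 1)
    (hpq : p ≠ q) (hx : 0 < x) :
    0 < s * psiKernel p x + t * psiKernel q x - psiKernel (s * p + t * q) x := by
  rw [psiKernel_gap p q s t x hst, sub_pos]
  have hne : -(p * x) ≠ -(q * x) := fun h => hpq (mul_right_cancel₀ hx.ne' (neg_injective h))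
  simpa using strictConvexOn_exp.2 (mem_univ _) (mem_univ _) hne hs ht hst

lemma strictConvexOn_psi {α β : ℝ} (hβ : 0 ≤ β) {ν : Measure ℝ} (hν : IsLevyMeasure ν)
    (h1 : Assumption1 α β ν) {θ₀ : ℝ} (h₀ : θ₀ ∈ ThetaPrime ν) :
    StrictConvexOn ℝ (Ioi θ₀) (psi α β ν) := by
  refine ⟨convex_Ioi θ₀, fun p hp q hq hpq s t hs ht hst => ?_⟩
  have hm : θ₀ ≤ s * p + t * q := by
    have := convex_Ioi θ₀ hp hq hs.le ht.le hst
    simpa using (mem_Ioi.1 this).le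
  have ip := integrable_psiKernel hν h₀ (le_of_lt hp)
  have iq := integrable_psiKernel hν h₀ (le_of_lt hq)
  have im := integrable_psiKernel hν h₀ hm
  have hint : ∫ x, (s * psiKernel p x + t * psiKernel q x - psiKernel (s * p + t * q) x) ∂ν =
      s * ∫ x, psiKernel p x ∂ν + t * ∫ x, psiKernel q x ∂ν
        - ∫ x, psiKernel (s * p + t * q) x ∂ν := by
    have ipq : Integrable (fun x => s * psiKernel p x + t * psiKernel q x) ν :=
      (ip.const_mul s).add (iq.const_mul t)
    rw [integral_sub ipq im, integral_add (ip.const_mul s) (iq.const_mul t),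
      integral_const_mul, integral_const_mul]
  have hpos : ∀ᵐ x ∂ν,
      0 < s * psiKernel p x + t * psiKernel q x - psiKernel (s * p + t * q) x := by
    filter_upwards [ae_pos_of_isLevyMeasure hν] with x hx
    exact psiKernel_gap_pos hs ht hst hpq hx
  have hnn : 0 ≤ ∫ x, (s * psiKernel p x + t * psiKernel q x
      - psiKernel (s * p + t * q) x) ∂ν :=
    integral_nonneg_of_ae (hpos.mono fun x hx => hx.le)
  have hsq : s * p ^ 2 + t * q ^ 2 - (s * p + t * q) ^ 2 = s * t * (p - q) ^ 2 := by
    have : s = 1 - t := by linarith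
    subst this; ring
  have hsq' : 0 < s * t * (p - q) ^ 2 := by
    have := sq_pos_of_ne_zero (sub_ne_zero.2 hpq)
    positivity
  have goal : 0 < β * (s * t * (p - q) ^ 2) + ∫ x, (s * psiKernel p x + t * psiKernel q x
      - psiKernel (s * p + t * q) x) ∂ν := by
    rcases h1.2 with hb | hb
    · have := mul_pos hb hsq'
      linarith
    · have : 0 < ∫ x, (s * psiKernel p x + t * psiKernel q x
          - psiKernel (s * p + t * q) x) ∂ν := by
        rw [integral_pos_iff_support_of_nonneg_ae (hpos.mono fun x hx => hx.le)
          (((ip.const_mul s).add (iq.const_mul t)).sub im)]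
        -- otherwise `Π` would not charge `(0,1)`, contradicting `∫_{(0,1)} x Π(dx) = ∞`
        have hsub : Ioo (0 : ℝ) 1 ⊆ Function.support (fun x => s * psiKernel p x
            + t * psiKernel q x - psiKernel (s * p + t * q) x) := fun x hx =>
          (psiKernel_gap_pos hs ht hst hpq hx.1).ne'
        refine lt_of_lt_of_le (pos_iff_ne_zero.2 fun h0 => ?_) (measure_mono hsub)
        rw [setLIntegral_measure_zero _ _ h0] at hb
        exact ENNReal.zero_ne_top hb
      have := mul_nonneg hβ hsq'.le
      linarith
  rw [hint, ← hsq] at goal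
  have e : ∀ l, psi α β ν l = α * l + β * l ^ 2 + ∫ x, psiKernel l x ∂ν := fun l => rfl
  simp only [e, smul_eq_mul]
  nlinarith

lemma psi_zero (α β : ℝ) (ν : Measure ℝ) : psi α β ν 0 = 0 := by
  simp [psi]

/-! ### Strictly convex functions with a critical point at the origin -/

/-- If `f(0) = 0`, strict convexity makes the chord slope `f(x) / x` strictly increasing in `x`. -/
lemma div_lt_div_of_strictConvexOn {f : ℝ → ℝ} {S : Set ℝ} (hf : StrictConvexOn ℝ S f)
    (h0 : (0 : ℝ) ∈ S) (hf0 : f 0 = 0) {x y : ℝ} (hx : x ∈ S) (hy : y ∈ S) (hx0 : x ≠ 0)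
    (hy0 : y ≠ 0) (hxy : x < y) : f x / x < f y / y := by
  simpa [hf0] using hf.secant_strict_mono h0 hx hy hx0 hy0 hxy

lemma div_pos_of_critical {f : ℝ → ℝ} {θ₀ : ℝ} (hf : StrictConvexOn ℝ (Ioi θ₀) f) (hθ₀ : θ₀ < 0)
    (hf0 : f 0 = 0) (hc : Tendsto (fun l => f l / l) (nhdsWithin 0 (Ioi 0)) (nhds 0))
    {l : ℝ} (hl : 0 < l) : 0 < f l / l := by
  have aux : ∀ m, 0 < m → 0 ≤ f m / m := fun m hm => by
    refine le_of_tendsto hc ?_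
    filter_upwards [Ioo_mem_nhdsGT hm] with x hx
    exact (div_lt_div_of_strictConvexOn hf hθ₀ hf0 (hθ₀.trans hx.1) (hθ₀.trans hm)
      hx.1.ne' hm.ne' hx.2).le
  refine (aux (l / 2) (by linarith)).trans_lt
    (div_lt_div_of_strictConvexOn hf hθ₀ hf0 ?_ (hθ₀.trans hl) (by linarith) hl.ne' (by linarith))
  exact hθ₀.trans (show (0 : ℝ) < l / 2 by linarith)

lemma div_neg_of_critical {f : ℝ → ℝ} {θ₀ : ℝ} (hf : StrictConvexOn ℝ (Ioi θ₀) f) (hθ₀ : θ₀ < 0)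
    (hf0 : f 0 = 0) (hc : Tendsto (fun l => f l / l) (nhdsWithin 0 (Ioi 0)) (nhds 0))
    {l : ℝ} (hl₀ : θ₀ < l) (hl : l < 0) : f l / l < 0 := by
  have h2 : θ₀ < l / 2 := by linarith
  have aux : f (l / 2) / (l / 2) ≤ 0 := by
    refine ge_of_tendsto hc ?_
    filter_upwards [self_mem_nhdsWithin] with x (hx : 0 < x)
    exact (div_lt_div_of_strictConvexOn hf hθ₀ hf0 h2 (hθ₀.trans hx)
      (by linarith) hx.ne' (by linarith)).le
  exact (div_lt_div_of_strictConvexOn hf hθ₀ hf0 hl₀ h2 hl.ne (by linarith)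
    (by linarith)).trans_le aux

lemma pos_of_critical {f : ℝ → ℝ} {θ₀ : ℝ} (hf : StrictConvexOn ℝ (Ioi θ₀) f) (hθ₀ : θ₀ < 0)
    (hf0 : f 0 = 0) (hc : Tendsto (fun l => f l / l) (nhdsWithin 0 (Ioi 0)) (nhds 0))
    {l : ℝ} (hl₀ : θ₀ < l) (hl : l ≠ 0) : 0 < f l := by
  rcases lt_or_gt_of_ne hl with h | h
  · have := div_neg_of_critical hf hθ₀ hf0 hc hl₀ h
    rw [div_neg_iff] at this
    rcases this with h' | h'
    · exact h'.1
    · linarith [h'.2]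
  · exact (div_pos_iff_of_pos_right h).1 (div_pos_of_critical hf hθ₀ hf0 hc h)

lemma lt_of_critical {f : ℝ → ℝ} {θ₀ : ℝ} (hf : StrictConvexOn ℝ (Ioi θ₀) f) (hθ₀ : θ₀ < 0)
    (hf0 : f 0 = 0) (hc : Tendsto (fun l => f l / l) (nhdsWithin 0 (Ioi 0)) (nhds 0))
    {x y : ℝ} (hx : 0 < x) (hxy : x < y) : f x < f y := by
  have hy := hx.trans hxy
  have h := div_lt_div_of_strictConvexOn hf hθ₀ hf0 (hθ₀.trans hx) (hθ₀.trans hy) hx.ne' hy.ne' hxy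
  have hp := pos_of_critical hf hθ₀ hf0 hc (hθ₀.trans hy) hy.ne'
  rw [div_lt_div_iff₀ hx hy] at h
  nlinarith

/-- Every positive level is attained on `(0, ∞)`, since `f(l) ≥ l f(1)` for `l ≥ 1`. -/
lemma exists_eq_of_critical {f : ℝ → ℝ} {θ₀ : ℝ} (hf : StrictConvexOn ℝ (Ioi θ₀) f) (hθ₀ : θ₀ < 0)
    (hf0 : f 0 = 0) (hc : Tendsto (fun l => f l / l) (nhdsWithin 0 (Ioi 0)) (nhds 0))
    {c : ℝ} (hcpos : 0 < c) : ∃ t, 0 < t ∧ f t = c := by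
  have hf1 : 0 < f 1 := pos_of_critical hf hθ₀ hf0 hc (hθ₀.trans one_pos) one_ne_zero
  have hL : 1 < c / f 1 + 1 := by have := div_pos hcpos hf1; linarith
  have hL0 : 0 < c / f 1 + 1 := one_pos.trans hL
  have h := div_lt_div_of_strictConvexOn hf hθ₀ hf0 (hθ₀.trans one_pos) (hθ₀.trans hL0)
    one_ne_zero hL0.ne' hL
  have hbig : c ≤ f (c / f 1 + 1) := by
    rw [div_one, lt_div_iff₀ hL0] at h
    have : f 1 * (c / f 1 + 1) = c + f 1 := by field_simp
    linarith
  have hcont : ContinuousOn f (Icc 0 (c / f 1 + 1)) :=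
    (hf.convexOn.continuousOn isOpen_Ioi).mono fun x hx => hθ₀.trans_le hx.1
  obtain ⟨t, ht, hft⟩ := intermediate_value_Icc hL0.le hcont
    (show c ∈ Icc (f 0) (f (c / f 1 + 1)) from ⟨by rw [hf0]; exact hcpos.le, hbig⟩)
  refine ⟨t, lt_of_le_of_ne ht.1 fun h0 => ?_, hft⟩
  rw [← h0, hf0] at hft
  exact hcpos.ne hft

/-! ### Tail integrals and the shift identities -/

/-- The tail integrals of a positive function determine their lower end. The value `h > 0` rules
out the convention that a divergent Bochner integral is `0`. -/
lemma eq_of_tail_integral_eq {g : ℝ → ℝ} {T B B' h : ℝ} (hg : ∀ r, T < r → 0 < g r)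
    (hB : T < B) (hB' : T < B') (hh : 0 < h) (e : ∫ r in Ioi B, g r = h)
    (e' : ∫ r in Ioi B', g r = h) : B = B' := by
  wlog hlt : B < B' generalizing B B'
  · rcases eq_or_lt_of_le (not_lt.1 hlt) with h' | h'
    · exact h'.symm
    · exact (this hB' hB e' e h').symm
  have hi : IntegrableOn g (Ioi B) := by
    by_contra hni
    rw [integral_undef hni] at e
    exact hh.ne e
  have i1 : IntegrableOn g (Ioc B B') := hi.mono_set Ioc_subset_Ioi_self
  have i2 : IntegrableOn g (Ioi B') := hi.mono_set (Ioi_subset_Ioi hlt.le)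
  have hsplit := setIntegral_union (Ioc_disjoint_Ioi le_rfl) measurableSet_Ioi i1 i2
  rw [Ioc_union_Ioi_eq_Ioi hlt.le, e, e'] at hsplit
  have hpos : 0 < ∫ r in Ioc B B', g r := by
    rw [← intervalIntegral.integral_of_le hlt.le]
    exact intervalIntegral.intervalIntegral_pos_of_pos_on
      ((intervalIntegrable_iff_integrableOn_Ioc_of_le hlt.le).2 i1)
      (fun x hx => hg x (hB.trans hx.1)) hlt
  linarith

lemma integral_psiShift_inv (α β : ℝ) (ν : Measure ℝ) (θ b : ℝ) :
    ∫ r in Ioi b, (psiShift α β ν θ r)⁻¹ =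
      ∫ r in Ioi (b + θ), (psi α β ν r - psi α β ν θ)⁻¹ := by
  have := (measurePreserving_add_right volume θ).setIntegral_preimage_emb
    (measurableEmbedding_addRight θ) (fun r => (psi α β ν r - psi α β ν θ)⁻¹) (Ioi (b + θ))
  simpa [psiShift] using this

/-- For critical `ψ` with `θ_∞ < 0` and `θ_∞ < θ < 0`: there is a unique `θ̄ > 0` with
`ψ(θ̄) = ψ(θ)`, and for every `h > 0`, `θ̄ + b^{θ̄}(h) = θ + b^θ(h)` and
`ψ_{θ̄}(b^{θ̄}(h)) = ψ_θ(b^θ(h))`. -/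
theorem thetaBar_shift_identities (α β : ℝ) (hβ : 0 ≤ β)
    (ν : MeasureTheory.Measure ℝ) (hν : IsLevyMeasure ν)
    (h1 : Assumption1 α β ν) (h2 : Assumption2 α β ν)
    (hcrit : IsCritical α β ν) (hinf : thetaInf ν < (0 : EReal))
    (θ : ℝ) (hθ1 : thetaInf ν < (θ : EReal)) (hθ2 : θ < 0) :
    (∃! tb : ℝ, 0 < tb ∧ psi α β ν tb = psi α β ν θ) ∧
    (∀ tb : ℝ, 0 < tb → psi α β ν tb = psi α β ν θ →
      ∀ b bbar : ℝ → ℝ,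
        (∀ h, 0 < h → qTheta α β ν θ < b h ∧
          ∫ r in Set.Ioi (b h), (psiShift α β ν θ r)⁻¹ = h) →
        (∀ h, 0 < h → qTheta α β ν tb < bbar h ∧
          ∫ r in Set.Ioi (bbar h), (psiShift α β ν tb r)⁻¹ = h) →
        ∀ h : ℝ, 0 < h →
          tb + bbar h = θ + b h ∧
          psiShift α β ν tb (bbar h) = psiShift α β ν θ (b h)) := by
  obtain ⟨θ₀, hθ₀, hθ₀θ⟩ : ∃ θ₀ ∈ ThetaPrime ν, θ₀ < θ := by
    simp only [thetaInf, iInf_lt_iff] at hθ1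
    obtain ⟨x, hx, hxθ⟩ := hθ1
    exact ⟨x, hx, EReal.coe_lt_coe_iff.1 hxθ⟩
  have hneg : θ₀ < 0 := hθ₀θ.trans hθ2
  have hf := strictConvexOn_psi hβ hν h1 hθ₀
  have hf0 := psi_zero α β ν
  have hinc : ∀ {x y : ℝ}, 0 < x → x < y → psi α β ν x < psi α β ν y :=
    fun hx hxy => lt_of_critical hf hneg hf0 hcrit hx hxy
  constructor
  · obtain ⟨t, ht, hft⟩ := exists_eq_of_critical hf hneg hf0 hcrit
      (pos_of_critical hf hneg hf0 hcrit hθ₀θ hθ2.ne)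
    refine ⟨t, ⟨ht, hft⟩, fun u ⟨hu, hfu⟩ => ?_⟩
    rcases lt_trichotomy u t with h | h | h
    · linarith [hinc hu h]
    · exact h
    · linarith [hinc ht h]
  · intro tb htb hψ b bbar hb hbbar h hh
    obtain ⟨hq, hI⟩ := hb h hh
    obtain ⟨hqb, hIb⟩ := hbbar h hh
    rw [integral_psiShift_inv] at hI hIb
    rw [hψ] at hIb
    -- `ψ_θ > 0` beyond `θ̄ - θ`, so the set defining `q_θ` is bounded and its `sSup` is not junk
    have hbdd : BddAbove ({0} ∪ {r : ℝ | 0 < r ∧ psiShift α β ν θ r ≤ 0}) := by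
      refine ⟨tb - θ, ?_⟩
      rintro r (hr | ⟨-, hr⟩)
      · rw [mem_singleton_iff.1 hr]; linarith
      · by_contra! hlt
        have := hinc htb (show tb < r + θ by linarith)
        unfold psiShift at hr
        linarith
    have hB : tb < b h + θ := by
      have hmem : tb - θ ≤ qTheta α β ν θ := by
        refine le_csSup hbdd (Or.inr ⟨by linarith, ?_⟩)
        simp [psiShift, hψ]
      linarith
    have hB' : tb < bbar h + tb := by
      have hbdd' : BddAbove ({0} ∪ {r : ℝ | 0 < r ∧ psiShift α β ν tb r ≤ 0}) := by
        refine ⟨0, ?_⟩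
        rintro r (hr | ⟨hr0, hr⟩)
        · exact (mem_singleton_iff.1 hr).le
        · have := hinc htb (show tb < r + tb by linarith)
          unfold psiShift at hr
          linarith
      have : 0 ≤ qTheta α β ν tb := le_csSup hbdd' (Or.inl rfl)
      linarith
    have hBB : b h + θ = bbar h + tb := by
      refine eq_of_tail_integral_eq (fun r hr => ?_) hB hB' hh hI hIb
      have := hinc htb hr
      exact inv_pos.2 (by linarith)
    exact ⟨by linarith, by unfold psiShift; rw [hBB, hψ]⟩
end
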